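/- arXiv:2212.00604 — 3 statements merged into one kernel-verified Lean document; each statement's English description precedes it below -/
import Mathlib

section
/- For every δ ∈ (0,1) there exists ε₀ = ε₀(δ) > 0 such that for every ε ∈ (0,ε₀) there is a constant C = C(δ,ε) > 0 with the following property. Let A > 0 and let {K_a}_{a≥0} be a family of measurable kernels K_a : ℝ² → ℂ satisfying, for all (λ,μ) ∈ ℝ² and all a, a₁, a₂ ≥ 0: |K_a(λ,μ)| ≤ (A/⟨a+iμ⟩) · min( 1/⟨λ⟩ + 1/⟨λ−μ⟩ , ⟨a⟩/⟨λ⟩² + ⟨a⟩/⟨λ−μ⟩² ) and |K_{a₂}(λ,μ) − K_{a₁}(λ,μ)| ≤ A·|a₂ − a₁|. Write (T_a g)(λ) := ∫_ℝ K_a(λ,μ) g(μ) dμ. Then for all measurable g : ℝ → ℂ (whenever the right-hand sides are finite): (1) ‖⟨λ⟩^{1/2+ε} (T_a g)(λ)‖_{L²_λ} ≤ C·A·⟨a⟩^{−δ/2}·‖⟨μ⟩^{−1/2+δ} g(μ)‖_{L²_μ}; (2) ‖⟨λ⟩^{1/2+ε} (T_a g)(λ)‖_{L²_λ} ≤ C·A·⟨a⟩^{−1/2+δ}·‖g‖_{L²};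 (3) ‖⟨λ⟩^{1/2+ε} ((T_{a₂} − T_{a₁}) g)(λ)‖_{L²_λ} ≤ C·A·|a₂ − a₁|^{ε}·‖⟨μ⟩^{−1/2+δ} g(μ)‖_{L²_μ}. -/
/-!
Write `L = ⟨λ⟩`, `M = ⟨μ⟩`, `D = ⟨λ-μ⟩`, `m = min(L, D)`. All three bounds reduce to one weighted
estimate: a kernel with `|H(λ,μ)| ≤ B M^{-(1-θ)} m^{-(1+2ε)}` maps `⟨μ⟩^{-1/2+γ} g ∈ L²` to
`⟨λ⟩^{1/2+ε} Tg ∈ L²` with norm `≲ B`, as soon as `ε + θ ≤ γ` (`weighted_L2_bound`). After moving the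
weights into the kernel, this is the `L²`-boundedness of `(L/M)^{q/2} m^{-q}` with `q = 1 + 2ε`. By
`L ≤ M + D` its square is at most `2^q (M^{-q} + D^{-q})(L^{-q} + D^{-q})` (`schur_weight`); the first
factor has bounded integral in `μ`, the second in `λ`, so Cauchy-Schwarz in `μ` followed by Tonelli
concludes.

The kernel hypothesis gives `|K_a| ≤ 2A ⟨a⟩^{s-θ} M^{-(1-θ)} m^{-(1+s)}` for `s, θ ∈ [0,1]`
(`KernelBound.interp`). With `s = 2ε`, the choices `θ = 3δ/4, γ = δ` and `θ = (1-δ)/2, γ = 1/2` yield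
the first two bounds. For the difference, interpolating `s = θ = 4ε` with the Lipschitz bound gives
`|K_{a₂} - K_{a₁}| ≤ 4A |a₂-a₁|^ε M^{-(1-5ε)} m^{-(1+2ε)}` (`diff_bound`), hence the third bound.
-/

noncomputable section

open MeasureTheory
open scoped ENNReal

/-- Japanese bracket of a real number: `⟨x⟩ = (1 + x²)^{1/2}`. -/
def jb (x : ℝ) : ℝ := Real.sqrt (1 + x ^ 2)

/-- `⟨a + iμ⟩ = (1 + a² + μ²)^{1/2}`. -/
def jbC (a μ : ℝ) : ℝ := Real.sqrt (1 + a ^ 2 + μ ^ 2)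

/-- The kernel bound hypothesis of Lemma 3.5:
`|K_a(λ,μ)| ≤ (A/⟨a+iμ⟩) min( ⟨λ⟩⁻¹ + ⟨λ-μ⟩⁻¹ , ⟨a⟩⟨λ⟩⁻² + ⟨a⟩⟨λ-μ⟩⁻² )`. -/
def KernelBound (A a : ℝ) (K : ℝ → ℝ → ℂ) : Prop :=
  ∀ l μ : ℝ, ‖K l μ‖ ≤ A / jbC a μ *
    min (1 / jb l + 1 / jb (l - μ)) (jb a / jb l ^ 2 + jb a / jb (l - μ) ^ 2)

/-! ### Japanese brackets -/

lemma jb_pos (x : ℝ) : 0 < jb x := Real.sqrt_pos.2 (by positivity)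

lemma one_le_jb (x : ℝ) : 1 ≤ jb x := Real.one_le_sqrt.2 (by nlinarith [sq_nonneg x])

lemma jbC_pos (a μ : ℝ) : 0 < jbC a μ := Real.sqrt_pos.2 (by positivity)

lemma jb_le_jbC_left (a μ : ℝ) : jb a ≤ jbC a μ :=
  Real.sqrt_le_sqrt (by nlinarith [sq_nonneg μ])

lemma jb_le_jbC_right (a μ : ℝ) : jb μ ≤ jbC a μ :=
  Real.sqrt_le_sqrt (by nlinarith [sq_nonneg a])

lemma jb_triangle (l μ : ℝ) : jb l ≤ jb μ + jb (l - μ) := by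
  have h1 := jb_pos μ
  have h2 := jb_pos (l - μ)
  have e1 : jb μ ^ 2 = 1 + μ ^ 2 := Real.sq_sqrt (by positivity)
  have e2 : jb (l - μ) ^ 2 = 1 + (l - μ) ^ 2 := Real.sq_sqrt (by positivity)
  have h3 : |μ| ≤ jb μ := Real.abs_le_sqrt (by linarith)
  have h4 : |l - μ| ≤ jb (l - μ) := Real.abs_le_sqrt (by linarith)
  have h5 : μ * (l - μ) ≤ jb μ * jb (l - μ) :=
    (le_abs_self _).trans (by rw [abs_mul]; gcongr)
  refine Real.sqrt_le_iff.2 ⟨by positivity, ?_⟩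
  nlinarith

@[fun_prop]
lemma continuous_jb : Continuous jb := by unfold jb; fun_prop

@[fun_prop]
lemma measurable_jb : Measurable jb := continuous_jb.measurable

lemma exists_lintegral_jb_le {q : ℝ} (hq : 1 < q) :
    ∃ J : ℝ, 0 < J ∧ ∫⁻ x : ℝ, ENNReal.ofReal (jb x ^ (-q)) ≤ ENNReal.ofReal J := by
  have h : Integrable (fun x : ℝ => jb x ^ (-q)) := by
    have := integrable_rpow_neg_one_add_norm_sq (E := ℝ) (μ := volume) (r := q) (by simpa using hq)
    refine this.congr (.of_forall fun x => ?_)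
    simp only [jb, Real.sqrt_eq_rpow, Real.norm_eq_abs, sq_abs]
    rw [← Real.rpow_mul (by positivity)]
    ring_nf
  have h0 : ∀ x, 0 ≤ jb x ^ (-q) := fun x => Real.rpow_nonneg (jb_pos x).le _
  refine ⟨(∫ x, jb x ^ (-q)) + 1, ?_, ?_⟩
  · have : 0 ≤ ∫ x, jb x ^ (-q) := integral_nonneg h0
    linarith
  rw [← ofReal_integral_eq_lintegral_ofReal h (.of_forall h0)]
  exact ENNReal.ofReal_le_ofReal (by linarith)

/-! ### The Schur test -/

/-- The pointwise inequality behind the Schur test, with `L = ⟨λ⟩`, `M = ⟨μ⟩`, `D = ⟨λ-μ⟩`.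
If `L ≤ D`, the left side is `L^{-q} M^{-q}`; otherwise `L ≤ 2 max(M, D)`. -/
lemma schur_weight {L M D q : ℝ} (hL : 1 ≤ L) (hM : 1 ≤ M) (hD : 1 ≤ D) (h : L ≤ M + D)
    (hq : 0 < q) :
    L ^ q * M ^ (-q) * min L D ^ (-(2 * q)) ≤
      2 ^ q * ((M ^ (-q) + D ^ (-q)) * (L ^ (-q) + D ^ (-q))) := by
  have hL0 : 0 < L := by linarith
  have hM0 : 0 < M := by linarith
  have hD0 : 0 < D := by linarith
  have h2 : (1 : ℝ) ≤ 2 ^ q := Real.one_le_rpow (by norm_num) hq.le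
  have pL : 0 < L ^ (-q) := by positivity
  have pM : 0 < M ^ (-q) := by positivity
  have pD : 0 < D ^ (-q) := by positivity
  have dbl : ∀ x : ℝ, 0 < x → x ^ (-(2 * q)) = x ^ (-q) * x ^ (-q) := fun x hx => by
    rw [← Real.rpow_add hx]; ring_nf
  have cancel : ∀ x : ℝ, 0 < x → x ^ q * x ^ (-q) = 1 := fun x hx => by
    rw [← Real.rpow_add hx]; simp
  rcases le_total L D with hLD | hDL
  · rw [min_eq_left hLD, dbl L hL0]
    calc L ^ q * M ^ (-q) * (L ^ (-q) * L ^ (-q))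
        = (L ^ q * L ^ (-q)) * (M ^ (-q) * L ^ (-q)) := by ring
      _ = 1 * (M ^ (-q) * L ^ (-q)) := by rw [cancel L hL0]
      _ ≤ _ := by gcongr <;> linarith
  · rw [min_eq_right hDL, dbl D hD0]
    rcases le_total M D with hMD | hDM
    · have : L ^ q ≤ 2 ^ q * D ^ q := by
        rw [← Real.mul_rpow (by norm_num) hD0.le]
        exact Real.rpow_le_rpow hL0.le (by linarith) hq.le
      calc L ^ q * M ^ (-q) * (D ^ (-q) * D ^ (-q))
          ≤ (2 ^ q * D ^ q) * M ^ (-q) * (D ^ (-q) * D ^ (-q)) := by gcongr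
        _ = 2 ^ q * ((D ^ q * D ^ (-q)) * (M ^ (-q) * D ^ (-q))) := by ring
        _ = 2 ^ q * (M ^ (-q) * D ^ (-q)) := by rw [cancel D hD0, one_mul]
        _ ≤ _ := by gcongr <;> linarith
    · have : L ^ q ≤ 2 ^ q * M ^ q := by
        rw [← Real.mul_rpow (by norm_num) hM0.le]
        exact Real.rpow_le_rpow hL0.le (by linarith) hq.le
      calc L ^ q * M ^ (-q) * (D ^ (-q) * D ^ (-q))
          ≤ (2 ^ q * M ^ q) * M ^ (-q) * (D ^ (-q) * D ^ (-q)) := by gcongr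
        _ = 2 ^ q * ((M ^ q * M ^ (-q)) * (D ^ (-q) * D ^ (-q))) := by ring
        _ = 2 ^ q * (D ^ (-q) * D ^ (-q)) := by rw [cancel M hM0, one_mul]
        _ ≤ _ := by gcongr <;> linarith

/-- Cauchy-Schwarz for the Lebesgue integral. -/
lemma lintegral_mul_sq_le {f h : ℝ → ℝ≥0∞} (hf : Measurable f) (hh : Measurable h) :
    (∫⁻ x, f x * h x) ^ 2 ≤ (∫⁻ x, f x ^ 2) * ∫⁻ x, h x ^ 2 := by
  have H := ENNReal.lintegral_mul_le_Lp_mul_Lq volume Real.HolderConjugate.two_two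
    hf.aemeasurable hh.aemeasurable
  simp only [Pi.mul_apply, ENNReal.rpow_two] at H
  calc _ ≤ ((∫⁻ x, f x ^ 2) ^ ((1 : ℝ) / 2) * (∫⁻ x, h x ^ 2) ^ ((1 : ℝ) / 2)) ^ 2 := by gcongr
    _ = _ := by
      rw [mul_pow, ← ENNReal.rpow_two, ← ENNReal.rpow_two, ← ENNReal.rpow_mul, ← ENNReal.rpow_mul]
      norm_num

/-- The weighted `L²` estimate common to the three bounds: a Schur test with the weights
`k₁ = ⟨μ⟩^{-q} + ⟨λ-μ⟩^{-q}` and `k₂ = ⟨λ⟩^{-q} + ⟨λ-μ⟩^{-q}`, `q = 1 + 2ε`. No measurability of `H`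
is needed, since only the upper bound for `‖H‖` is ever integrated in both variables. -/
lemma weighted_L2_bound {ε : ℝ} (hε : 0 < ε) : ∃ C : ℝ, 0 < C ∧
    ∀ (B θ γ : ℝ), 0 ≤ B → ε + θ ≤ γ → ∀ (H : ℝ → ℝ → ℂ) (g : ℝ → ℂ), Measurable g →
      (∀ l μ, ‖H l μ‖ ≤ B * jb μ ^ (-(1 - θ)) * min (jb l) (jb (l - μ)) ^ (-(1 + 2 * ε))) →
      (∫⁻ l : ℝ, ENNReal.ofReal
          ((jb l ^ ((1 : ℝ) / 2 + ε) * ‖∫ μ : ℝ, H l μ * g μ‖) ^ 2)) ^ ((1 : ℝ) / 2)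
        ≤ ENNReal.ofReal (C * B) *
          (∫⁻ μ : ℝ,
            ENNReal.ofReal ((jb μ ^ (-(1 : ℝ) / 2 + γ) * ‖g μ‖) ^ 2)) ^ ((1 : ℝ) / 2) := by
  set q : ℝ := 1 + 2 * ε with hq
  obtain ⟨J, hJ, hJI⟩ := exists_lintegral_jb_le (q := q) (by linarith)
  refine ⟨2 ^ (q / 2) * (2 * J), by positivity, ?_⟩
  intro B θ γ hB hγ H g hg hH
  have hp : (1 : ℝ) / 2 + ε = q / 2 := by rw [hq]; ring
  rw [hp]
  set h : ℝ → ℝ := fun μ => jb μ ^ (-(1 : ℝ) / 2 + γ) * ‖g μ‖ with hh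
  have hhm : Measurable h := by fun_prop
  have hh0 : ∀ μ, 0 ≤ h μ := fun μ => mul_nonneg (Real.rpow_nonneg (jb_pos μ).le _) (norm_nonneg _)
  set k₁ : ℝ → ℝ → ℝ := fun l μ => jb μ ^ (-q) + jb (l - μ) ^ (-q) with hk₁
  set k₂ : ℝ → ℝ → ℝ := fun l μ => jb l ^ (-q) + jb (l - μ) ^ (-q) with hk₂
  have jp : ∀ x r : ℝ, 0 < jb x ^ r := fun x r => Real.rpow_pos_of_pos (jb_pos x) r
  have k₁0 : ∀ l μ, 0 ≤ k₁ l μ := fun l μ => (add_pos (jp _ _) (jp _ _)).le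
  have k₂0 : ∀ l μ, 0 ≤ k₂ l μ := fun l μ => (add_pos (jp _ _) (jp _ _)).le
  have pt : ∀ l μ, jb l ^ (q / 2) * ‖H l μ * g μ‖ ≤
      (2 ^ (q / 2) * B) * (Real.sqrt (k₁ l μ) * (Real.sqrt (k₂ l μ) * h μ)) := by
    intro l μ
    set m := min (jb l) (jb (l - μ)) with hm
    have hm0 : 0 < m := lt_min (jb_pos _) (jb_pos _)
    have hW : jb l ^ (q / 2) * jb μ ^ (-(q / 2)) * m ^ (-q) ≤
        2 ^ (q / 2) * (Real.sqrt (k₁ l μ) * Real.sqrt (k₂ l μ)) := by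
      have hs := Real.sqrt_le_sqrt (schur_weight (one_le_jb l) (one_le_jb μ) (one_le_jb (l - μ))
        (jb_triangle l μ) (q := q) (by linarith))
      have sq : ∀ x r : ℝ, 0 < x → x ^ r = Real.sqrt (x ^ (2 * r)) := fun x r hx => by
        rw [Real.sqrt_eq_rpow, ← Real.rpow_mul hx.le]; ring_nf
      rw [sq _ _ (jb_pos l), sq _ _ (jb_pos μ), sq _ _ hm0, sq 2 _ (by norm_num),
        ← Real.sqrt_mul (jp _ _).le, ← Real.sqrt_mul (k₁0 l μ),
        ← Real.sqrt_mul (mul_nonneg (jp _ _).le (jp _ _).le),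
        ← Real.sqrt_mul (Real.rpow_nonneg (by norm_num) _)]
      rwa [show 2 * (q / 2) = q by ring, show 2 * -(q / 2) = -q by ring,
        show 2 * -q = -(2 * q) by ring]
    have hexp : jb μ ^ (-(1 - θ)) ≤ jb μ ^ (-(q / 2)) * jb μ ^ (-(1 : ℝ) / 2 + γ) := by
      rw [← Real.rpow_add (jb_pos μ)]
      exact Real.rpow_le_rpow_of_exponent_le (one_le_jb μ) (by rw [hq]; linarith)
    calc jb l ^ (q / 2) * ‖H l μ * g μ‖
        ≤ jb l ^ (q / 2) * ((B * (jb μ ^ (-(q / 2)) * jb μ ^ (-(1 : ℝ) / 2 + γ)) * m ^ (-q))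
            * ‖g μ‖) := by
          rw [norm_mul]
          have := (jp l (q / 2)).le
          gcongr
          refine (hH l μ).trans ?_
          gcongr
      _ = B * (jb l ^ (q / 2) * jb μ ^ (-(q / 2)) * m ^ (-q)) * h μ := by rw [hh]; ring
      _ ≤ B * (2 ^ (q / 2) * (Real.sqrt (k₁ l μ) * Real.sqrt (k₂ l μ))) * h μ := by
          have := hh0 μ
          gcongr
      _ = _ := by ring
  have hk₁I : ∀ l, ∫⁻ μ, ENNReal.ofReal (k₁ l μ) ≤ ENNReal.ofReal (2 * J) := by
    intro l
    simp only [hk₁]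
    simp_rw [ENNReal.ofReal_add (jp _ _).le (jp _ _).le]
    rw [lintegral_add_left (by fun_prop),
      lintegral_sub_left_eq_self (fun x => ENNReal.ofReal (jb x ^ (-q))) l, two_mul,
      ENNReal.ofReal_add hJ.le hJ.le]
    gcongr
  have hk₂I : ∀ μ, ∫⁻ l, ENNReal.ofReal (k₂ l μ) ≤ ENNReal.ofReal (2 * J) := by
    intro μ
    simp only [hk₂]
    simp_rw [ENNReal.ofReal_add (jp _ _).le (jp _ _).le]
    rw [lintegral_add_left (by fun_prop),
      lintegral_sub_right_eq_self (fun x => ENNReal.ofReal (jb x ^ (-q))) μ, two_mul,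
      ENNReal.ofReal_add hJ.le hJ.le]
    gcongr
  set c : ℝ := 2 ^ (q / 2) * B with hc
  have hc0 : 0 ≤ c := by positivity
  have row : ∀ l, ENNReal.ofReal ((jb l ^ (q / 2) * ‖∫ μ : ℝ, H l μ * g μ‖) ^ 2) ≤
      ENNReal.ofReal c ^ 2 * (ENNReal.ofReal (2 * J) *
        ∫⁻ μ, ENNReal.ofReal (k₂ l μ) * ENNReal.ofReal (h μ ^ 2)) := by
    intro l
    have hl := (jp l (q / 2)).le
    have h1 : ENNReal.ofReal (jb l ^ (q / 2) * ‖∫ μ : ℝ, H l μ * g μ‖) ≤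
        ENNReal.ofReal c * ∫⁻ μ, ENNReal.ofReal (Real.sqrt (k₁ l μ)) *
          ENNReal.ofReal (Real.sqrt (k₂ l μ) * h μ) := by
      rw [ENNReal.ofReal_mul hl, ofReal_norm]
      calc _ ≤ ENNReal.ofReal (jb l ^ (q / 2)) * ∫⁻ μ, ‖H l μ * g μ‖ₑ := by
            gcongr; exact enorm_integral_le_lintegral_enorm _
        _ = ∫⁻ μ, ENNReal.ofReal (jb l ^ (q / 2) * ‖H l μ * g μ‖) := by
            rw [← lintegral_const_mul' _ _ ENNReal.ofReal_ne_top]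
            simp_rw [ENNReal.ofReal_mul hl, ofReal_norm]
        _ ≤ ∫⁻ μ, ENNReal.ofReal (c * (Real.sqrt (k₁ l μ) * (Real.sqrt (k₂ l μ) * h μ))) :=
            lintegral_mono fun μ => ENNReal.ofReal_le_ofReal (pt l μ)
        _ = _ := by
            rw [← lintegral_const_mul' _ _ ENNReal.ofReal_ne_top]
            simp_rw [ENNReal.ofReal_mul hc0, ENNReal.ofReal_mul (Real.sqrt_nonneg (k₁ _ _))]
    rw [ENNReal.ofReal_pow (mul_nonneg hl (norm_nonneg _))]
    refine (pow_le_pow_left' h1 2).trans ?_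
    rw [mul_pow]
    gcongr
    refine (lintegral_mul_sq_le (by fun_prop) (by fun_prop)).trans ?_
    have e1 : ∀ μ, ENNReal.ofReal (Real.sqrt (k₁ l μ)) ^ 2 = ENNReal.ofReal (k₁ l μ) := fun μ => by
      rw [← ENNReal.ofReal_pow (Real.sqrt_nonneg _), Real.sq_sqrt (k₁0 l μ)]
    have e2 : ∀ μ, ENNReal.ofReal (Real.sqrt (k₂ l μ) * h μ) ^ 2 =
        ENNReal.ofReal (k₂ l μ) * ENNReal.ofReal (h μ ^ 2) := fun μ => by
      rw [← ENNReal.ofReal_pow (mul_nonneg (Real.sqrt_nonneg _) (hh0 μ)), mul_pow,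
        Real.sq_sqrt (k₂0 l μ), ENNReal.ofReal_mul (k₂0 l μ)]
    simp_rw [e1, e2]
    gcongr
    exact hk₁I l
  have total : ∫⁻ l, ENNReal.ofReal ((jb l ^ (q / 2) * ‖∫ μ : ℝ, H l μ * g μ‖) ^ 2) ≤
      ENNReal.ofReal (c * (2 * J)) ^ 2 * ∫⁻ μ, ENNReal.ofReal (h μ ^ 2) := by
    refine (lintegral_mono row).trans ?_
    rw [lintegral_const_mul' _ _ (by simp), lintegral_const_mul' _ _ ENNReal.ofReal_ne_top,
      lintegral_lintegral_swap (by fun_prop)]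
    calc _ ≤ ENNReal.ofReal c ^ 2 * (ENNReal.ofReal (2 * J) *
          ∫⁻ μ, ENNReal.ofReal (2 * J) * ENNReal.ofReal (h μ ^ 2)) := by
          gcongr with μ
          rw [lintegral_mul_const' _ _ (by simp)]
          gcongr
          exact hk₂I μ
      _ = _ := by
          rw [lintegral_const_mul' _ _ ENNReal.ofReal_ne_top, ENNReal.ofReal_mul hc0]
          ring
  calc _ ≤ (ENNReal.ofReal (c * (2 * J)) ^ 2 * ∫⁻ μ, ENNReal.ofReal (h μ ^ 2)) ^ ((1 : ℝ) / 2) := by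
        gcongr
    _ = _ := by
      rw [ENNReal.mul_rpow_of_nonneg _ _ (by norm_num), ← ENNReal.rpow_two, ← ENNReal.rpow_mul]
      rw [show (2 : ℝ) * (1 / 2) = 1 by norm_num, ENNReal.rpow_one]
      congr 2
      rw [hc]; ring

/-! ### Interpolated kernel bounds -/

/-- The two bounds in the minimum are interpolated with weights `1 - s` and `s`, and the factor
`⟨a+iμ⟩⁻¹` is split as `⟨a+iμ⟩^{-θ} ⟨a+iμ⟩^{-(1-θ)} ≤ ⟨a⟩^{-θ} ⟨μ⟩^{-(1-θ)}`. -/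
lemma KernelBound.interp {A a : ℝ} {K : ℝ → ℝ → ℂ} (hA : 0 < A) (hK : KernelBound A a K)
    {s θ : ℝ} (hs : s ∈ Set.Icc (0 : ℝ) 1) (hθ : θ ∈ Set.Icc (0 : ℝ) 1) (l μ : ℝ) :
    ‖K l μ‖ ≤ 2 * A * jb a ^ (s - θ) * jb μ ^ (-(1 - θ)) * min (jb l) (jb (l - μ)) ^ (-(1 + s)) := by
  refine (hK l μ).trans ?_
  have hα := jb_pos a
  have hM := jb_pos μ
  have hL := jb_pos l
  have hD := jb_pos (l - μ)
  have hJ := jbC_pos a μ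
  set m := min (jb l) (jb (l - μ)) with hm
  have hm0 : 0 < m := lt_min hL hD
  have hmL : m ≤ jb l := min_le_left _ _
  have hmD : m ≤ jb (l - μ) := min_le_right _ _
  have key : min (1 / jb l + 1 / jb (l - μ)) (jb a / jb l ^ 2 + jb a / jb (l - μ) ^ 2) ≤
      2 * (jb a ^ s * m ^ (-(1 + s))) := by
    have e : jb a ^ s * m ^ (-(1 + s)) = (1 / m) * (jb a / m) ^ s := by
      rw [Real.div_rpow hα.le hm0.le, neg_add, Real.rpow_add hm0, Real.rpow_neg hm0.le,
        Real.rpow_neg hm0.le, Real.rpow_one]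
      field_simp
    rw [e]
    rcases le_total m (jb a) with h | h
    · refine (min_le_left _ _).trans ?_
      have : 1 ≤ (jb a / m) ^ s := Real.one_le_rpow ((one_le_div hm0).2 h) hs.1
      calc 1 / jb l + 1 / jb (l - μ) ≤ 1 / m + 1 / m := by gcongr
        _ = 2 * (1 / m * 1) := by ring
        _ ≤ _ := by gcongr
    · refine (min_le_right _ _).trans ?_
      have : jb a / m ≤ (jb a / m) ^ s := by
        simpa using Real.rpow_le_rpow_of_exponent_ge (by positivity) ((div_le_one hm0).2 h) hs.2
      calc jb a / jb l ^ 2 + jb a / jb (l - μ) ^ 2 ≤ jb a / m ^ 2 + jb a / m ^ 2 := by gcongr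
        _ = 2 * (1 / m * (jb a / m)) := by field_simp; ring
        _ ≤ _ := by gcongr
  have hJ2 : jb a ^ θ * jb μ ^ (1 - θ) ≤ jbC a μ := by
    calc jb a ^ θ * jb μ ^ (1 - θ) ≤ jbC a μ ^ θ * jbC a μ ^ (1 - θ) := by
          have := hθ.1
          have : 0 ≤ 1 - θ := by linarith [hθ.2]
          gcongr
          · exact jb_le_jbC_left a μ
          · exact jb_le_jbC_right a μ
      _ = _ := by rw [← Real.rpow_add hJ]; simp
  calc _ ≤ A / (jb a ^ θ * jb μ ^ (1 - θ)) * (2 * (jb a ^ s * m ^ (-(1 + s)))) := by gcongr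
    _ = _ := by
      rw [Real.rpow_sub hα, Real.rpow_neg hM.le (1 - θ)]
      field_simp

/-- The bound `|K_a(λ,μ)| ≲ ⟨μ⟩⁻¹` makes every integral `∫ K_a(λ,μ) g(μ) dμ` absolutely convergent
once `⟨μ⟩^{-1/2+δ} g` is square integrable. -/
lemma KernelBound.integrable_mul {A a : ℝ} {K : ℝ → ℝ → ℂ} (hA : 0 < A) (hK : KernelBound A a K)
    (hKm : Measurable (Function.uncurry K)) {δ : ℝ} (hδ : 0 < δ) {g : ℝ → ℂ} (hg : Measurable g)
    (hfin : ∫⁻ μ : ℝ, ENNReal.ofReal ((jb μ ^ (-(1 : ℝ) / 2 + δ) * ‖g μ‖) ^ 2) ≠ ∞) (l : ℝ) :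
    Integrable fun μ => K l μ * g μ := by
  have hm : Measurable fun μ => K l μ := hKm.comp measurable_prodMk_left
  refine ⟨(hm.mul hg).aestronglyMeasurable, ?_⟩
  obtain ⟨J, -, hJ⟩ := exists_lintegral_jb_le (q := 1 + 2 * δ) (by linarith)
  have hb : ∀ μ, ‖K l μ * g μ‖ₑ ≤ ENNReal.ofReal (2 * A) *
      (ENNReal.ofReal (jb μ ^ (-(1 / 2 + δ))) *
        ENNReal.ofReal (jb μ ^ (-(1 : ℝ) / 2 + δ) * ‖g μ‖)) := by
    intro μ
    have hM := jb_pos μ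
    rw [← ofReal_norm, ← ENNReal.ofReal_mul (by positivity), ← ENNReal.ofReal_mul (by positivity)]
    refine ENNReal.ofReal_le_ofReal ?_
    have h0 := hK.interp hA (s := 0) (θ := 0) (by simp) (by simp) l μ
    have hmin : min (jb l) (jb (l - μ)) ^ (-(1 + 0 : ℝ)) ≤ 1 :=
      Real.rpow_le_one_of_one_le_of_nonpos (le_min (one_le_jb _) (one_le_jb _)) (by norm_num)
    rw [norm_mul, ← mul_assoc (jb μ ^ _), ← Real.rpow_add hM, ← mul_assoc]
    gcongr
    calc _ ≤ _ := h0
      _ ≤ 2 * A * jb a ^ (0 - 0 : ℝ) * jb μ ^ (-(1 - 0 : ℝ)) * 1 := by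
        have := jb_pos a
        gcongr
      _ = _ := by
        rw [sub_zero, Real.rpow_zero, mul_one, mul_one]
        congr 2; ring
  refine (lintegral_mono hb).trans_lt ?_
  rw [lintegral_const_mul' _ _ ENNReal.ofReal_ne_top]
  refine ENNReal.mul_lt_top ENNReal.ofReal_lt_top ?_
  have cs := lintegral_mul_sq_le (f := fun μ => ENNReal.ofReal (jb μ ^ (-(1 / 2 + δ))))
    (h := fun μ => ENNReal.ofReal (jb μ ^ (-(1 : ℝ) / 2 + δ) * ‖g μ‖)) (by fun_prop) (by fun_prop)
  have e1 : ∀ μ, ENNReal.ofReal (jb μ ^ (-(1 / 2 + δ))) ^ 2 =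
      ENNReal.ofReal (jb μ ^ (-(1 + 2 * δ))) := fun μ => by
    have hM := jb_pos μ
    rw [← ENNReal.ofReal_pow (by positivity), ← Real.rpow_mul_natCast hM.le]
    congr 2; push_cast; ring
  have e2 : ∀ μ, ENNReal.ofReal (jb μ ^ (-(1 : ℝ) / 2 + δ) * ‖g μ‖) ^ 2 =
      ENNReal.ofReal ((jb μ ^ (-(1 : ℝ) / 2 + δ) * ‖g μ‖) ^ 2) := fun μ => by
    have hM := jb_pos μ
    rw [← ENNReal.ofReal_pow (by positivity)]
  simp_rw [e1, e2] at cs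
  have := cs.trans_lt (ENNReal.mul_lt_top (hJ.trans_lt ENNReal.ofReal_lt_top) hfin.lt_top)
  exact (ENNReal.pow_lt_top_iff.1 this).resolve_right (by norm_num)

/-- Geometric interpolation, with exponents `ε` and `1 - ε`, between the Lipschitz bound and the sum
of the two kernel bounds. -/
lemma diff_bound {A a₁ a₂ : ℝ} {K₁ K₂ : ℝ → ℝ → ℂ} (hA : 0 < A)
    (h₁ : KernelBound A a₁ K₁) (h₂ : KernelBound A a₂ K₂)
    (hL : ∀ l μ : ℝ, ‖K₂ l μ - K₁ l μ‖ ≤ A * |a₂ - a₁|) {ε : ℝ} (hε : 0 < ε) (hε' : ε ≤ 1 / 8)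
    (l μ : ℝ) :
    ‖K₂ l μ - K₁ l μ‖ ≤ 4 * A * |a₂ - a₁| ^ ε * jb μ ^ (-(1 - 5 * ε)) *
      min (jb l) (jb (l - μ)) ^ (-(1 + 2 * ε)) := by
  have hM := jb_pos μ
  set m := min (jb l) (jb (l - μ)) with hm
  have hm1 : 1 ≤ m := le_min (one_le_jb _) (one_le_jb _)
  have hm0 : 0 < m := by linarith
  -- With `s = θ = 4ε` the factor `⟨a⟩^{s-θ}` is trivial, and `(1 + 4ε)(1 - ε) ≥ 1 + 2ε` leaves
  -- the decay in `m` that the Schur test requires.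
  have hs : 4 * ε ∈ Set.Icc (0 : ℝ) 1 := ⟨by linarith, by linarith⟩
  have b₁ := h₁.interp hA hs hs l μ
  have b₂ := h₂.interp hA hs hs l μ
  rw [sub_self, Real.rpow_zero, mul_one, ← hm] at b₁ b₂
  set n := ‖K₂ l μ - K₁ l μ‖ with hn
  have b : n ≤ 4 * A * (jb μ ^ (-(1 - 4 * ε)) * m ^ (-(1 + 4 * ε))) := by
    refine (norm_sub_le _ _).trans ?_
    linarith
  have hn0 : 0 ≤ n := norm_nonneg _
  have split : n = n ^ ε * n ^ (1 - ε) := by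
    rw [← Real.rpow_add_of_nonneg hn0 hε.le (by linarith)]; simp
  have f1 : n ^ ε ≤ A ^ ε * |a₂ - a₁| ^ ε := by
    rw [← Real.mul_rpow hA.le (abs_nonneg _)]
    exact Real.rpow_le_rpow hn0 (hL l μ) hε.le
  have f2 : n ^ (1 - ε) ≤ 4 * A ^ (1 - ε) * (jb μ ^ (-(1 - 5 * ε)) * m ^ (-(1 + 2 * ε))) := by
    calc n ^ (1 - ε) ≤ (4 * A * (jb μ ^ (-(1 - 4 * ε)) * m ^ (-(1 + 4 * ε)))) ^ (1 - ε) :=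
          Real.rpow_le_rpow hn0 b (by linarith)
      _ = 4 ^ (1 - ε) * A ^ (1 - ε) *
          (jb μ ^ (-(1 - 4 * ε) * (1 - ε)) * m ^ (-(1 + 4 * ε) * (1 - ε))) := by
        rw [Real.mul_rpow (by positivity) (by positivity), Real.mul_rpow (by positivity) hA.le,
          Real.mul_rpow (by positivity) (by positivity), ← Real.rpow_mul hM.le,
          ← Real.rpow_mul hm0.le]
      _ ≤ _ := by
        gcongr
        · calc (4 : ℝ) ^ (1 - ε) ≤ 4 ^ (1 : ℝ) :=
              Real.rpow_le_rpow_of_exponent_le (by norm_num) (by linarith)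
            _ = 4 := Real.rpow_one 4
        · exact one_le_jb μ
        · nlinarith
        · nlinarith
  calc n = n ^ ε * n ^ (1 - ε) := split
    _ ≤ (A ^ ε * |a₂ - a₁| ^ ε) *
        (4 * A ^ (1 - ε) * (jb μ ^ (-(1 - 5 * ε)) * m ^ (-(1 + 2 * ε)))) := by gcongr
    _ = 4 * (A ^ ε * A ^ (1 - ε)) * |a₂ - a₁| ^ ε * jb μ ^ (-(1 - 5 * ε)) * m ^ (-(1 + 2 * ε)) := by
        ring
    _ = _ := by rw [← Real.rpow_add hA]; simp

/-! ### The three bounds -/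

/-- Lemma 3.5 (v): interpolated bounds for the kernel family `{K_a}` satisfying the
kernel bound and the Lipschitz-in-`a` bound. -/
theorem kernel_bound_v (δ : ℝ) (hδ : δ ∈ Set.Ioo (0 : ℝ) 1) :
    ∃ ε₀ > (0 : ℝ), ∀ ε ∈ Set.Ioo (0 : ℝ) ε₀, ∃ C > (0 : ℝ),
      ∀ A : ℝ, 0 < A → ∀ K : ℝ → ℝ → ℝ → ℂ,
        (∀ a : ℝ, 0 ≤ a → Measurable (Function.uncurry (K a))) →
        (∀ a : ℝ, 0 ≤ a → KernelBound A a (K a)) →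
        (∀ a₁ a₂ : ℝ, 0 ≤ a₁ → 0 ≤ a₂ →
          ∀ l μ : ℝ, ‖K a₂ l μ - K a₁ l μ‖ ≤ A * |a₂ - a₁|) →
        ∀ g : ℝ → ℂ, Measurable g →
          (∀ a : ℝ, 0 ≤ a →
            (∫⁻ l : ℝ,
                ENNReal.ofReal
                  ((jb l ^ ((1 : ℝ) / 2 + ε) * ‖∫ μ : ℝ, K a l μ * g μ‖) ^ 2)) ^ ((1 : ℝ) / 2)
              ≤ ENNReal.ofReal (C * A * jb a ^ (-(δ / 2))) *
                (∫⁻ μ : ℝ,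
                  ENNReal.ofReal ((jb μ ^ (-(1 : ℝ) / 2 + δ) * ‖g μ‖) ^ 2)) ^ ((1 : ℝ) / 2)) ∧
          (∀ a : ℝ, 0 ≤ a →
            (∫⁻ l : ℝ,
                ENNReal.ofReal
                  ((jb l ^ ((1 : ℝ) / 2 + ε) * ‖∫ μ : ℝ, K a l μ * g μ‖) ^ 2)) ^ ((1 : ℝ) / 2)
              ≤ ENNReal.ofReal (C * A * jb a ^ (-(1 : ℝ) / 2 + δ)) *
                (∫⁻ μ : ℝ, ENNReal.ofReal (‖g μ‖ ^ 2)) ^ ((1 : ℝ) / 2)) ∧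
          (∀ a₁ a₂ : ℝ, 0 ≤ a₁ → 0 ≤ a₂ →
            (∫⁻ l : ℝ,
                ENNReal.ofReal
                  ((jb l ^ ((1 : ℝ) / 2 + ε) *
                    ‖(∫ μ : ℝ, K a₂ l μ * g μ) - ∫ μ : ℝ, K a₁ l μ * g μ‖) ^ 2)) ^ ((1 : ℝ) / 2)
              ≤ ENNReal.ofReal (C * A * |a₂ - a₁| ^ ε) *
                (∫⁻ μ : ℝ,
                  ENNReal.ofReal ((jb μ ^ (-(1 : ℝ) / 2 + δ) * ‖g μ‖) ^ 2)) ^ ((1 : ℝ) / 2)) := by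
  obtain ⟨hδ0, hδ1⟩ := hδ
  refine ⟨δ / 8, by linarith, ?_⟩
  rintro ε ⟨hε, hεδ⟩
  obtain ⟨C, hC, key⟩ := weighted_L2_bound hε
  refine ⟨4 * C, by linarith, ?_⟩
  intro A hA K hKm hKb hLip g hg
  have hs : 2 * ε ∈ Set.Icc (0 : ℝ) 1 := ⟨by linarith, by linarith⟩
  -- The first two bounds share one argument, with `θ` the power of `⟨a⟩` extracted from `⟨a+iμ⟩`.
  have single : ∀ θ γ r : ℝ, θ ∈ Set.Icc (0 : ℝ) 1 → ε + θ ≤ γ → 2 * ε - θ ≤ r → ∀ a : ℝ, 0 ≤ a →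
      (∫⁻ l : ℝ, ENNReal.ofReal
          ((jb l ^ ((1 : ℝ) / 2 + ε) * ‖∫ μ : ℝ, K a l μ * g μ‖) ^ 2)) ^ ((1 : ℝ) / 2)
        ≤ ENNReal.ofReal (4 * C * A * jb a ^ r) *
          (∫⁻ μ : ℝ,
            ENNReal.ofReal ((jb μ ^ (-(1 : ℝ) / 2 + γ) * ‖g μ‖) ^ 2)) ^ ((1 : ℝ) / 2) := by
    intro θ γ r hθ hγ hr a ha
    have hα := jb_pos a
    refine (key (2 * A * jb a ^ (2 * ε - θ)) θ γ (by positivity) hγ (K a) g hg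
      ((hKb a ha).interp hA hs hθ)).trans ?_
    gcongr ENNReal.ofReal ?_ * _
    have : jb a ^ (2 * ε - θ) ≤ jb a ^ r := Real.rpow_le_rpow_of_exponent_le (one_le_jb a) hr
    calc C * (2 * A * jb a ^ (2 * ε - θ)) ≤ C * (2 * A * jb a ^ r) := by gcongr
      _ ≤ 4 * C * A * jb a ^ r := by
        have : 0 ≤ C * A * jb a ^ r := by positivity
        linarith
  refine ⟨single (3 * δ / 4) δ _ ⟨by linarith, by linarith⟩ (by linarith) (by linarith), ?_, ?_⟩
  · intro a ha
    have := single (1 / 2 - δ / 2) (1 / 2) (-(1 : ℝ) / 2 + δ) ⟨by linarith, by linarith⟩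
      (by linarith) (by linarith) a ha
    simpa [neg_div] using this
  · intro a₁ a₂ h₁ h₂
    rcases eq_or_ne a₁ a₂ with rfl | hne
    · simp
    -- If the right-hand norm is infinite there is nothing to prove, as the coefficient is nonzero;
    -- otherwise the integrals converge absolutely and may be subtracted.
    by_cases hfin : ∫⁻ μ : ℝ, ENNReal.ofReal ((jb μ ^ (-(1 : ℝ) / 2 + δ) * ‖g μ‖) ^ 2) = ∞
    · have hpos : 0 < 4 * C * A * |a₂ - a₁| ^ ε := by
        have : 0 < |a₂ - a₁| := abs_pos.2 (sub_ne_zero.2 hne.symm)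
        positivity
      rw [hfin, ENNReal.top_rpow_of_pos (by norm_num), ENNReal.mul_top (by simpa using hpos)]
      exact le_top
    · have hsub : ∀ l, (∫ μ : ℝ, K a₂ l μ * g μ) - ∫ μ : ℝ, K a₁ l μ * g μ =
          ∫ μ : ℝ, (K a₂ l μ - K a₁ l μ) * g μ := fun l => by
        rw [← integral_sub ((hKb a₂ h₂).integrable_mul hA (hKm a₂ h₂) hδ0 hg hfin l)
          ((hKb a₁ h₁).integrable_mul hA (hKm a₁ h₁) hδ0 hg hfin l)]
        simp_rw [sub_mul]
      simp_rw [hsub]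
      refine (key (4 * A * |a₂ - a₁| ^ ε) (5 * ε) δ (by positivity) (by linarith)
        (fun l μ => K a₂ l μ - K a₁ l μ) g hg
        (diff_bound hA (hKb a₁ h₁) (hKb a₂ h₂) (hLip a₁ a₂ h₁ h₂) hε (by linarith))).trans ?_
      gcongr ENNReal.ofReal ?_ * _
      exact le_of_eq (by ring)
end
end

section
/- Let φ : ℝ → ℝ be smooth with φ ≡ 1 on [−1,1] and φ ≡ 0 outside [−2,2]. For γ ∈ [0,1], n ∈ ℤ², and λ, μ ∈ ℝ with γ⟨n⟩² + iμ ≠ 0 (i.e. γ > 0 or μ ≠ 0), define K_γ(n,λ,μ) := ∫_ℝ φ(t) e^{−itλ} · (e^{γ(t−|t|)⟨n⟩² + itμ} − e^{−γ|t|⟨n⟩²}) / (γ⟨n⟩² + iμ) dt. Then there exists a constant C > 0, depending only on φ, such that for all such γ, n, λ, μ: |K_γ(n,λ,μ)| ≤ (C/⟨γ⟨n⟩² + iμ⟩) · min( 1/⟨λ⟩ + 1/⟨λ−μ⟩ , ⟨γ⟨n⟩²⟩/⟨λ⟩² + ⟨γ⟨n⟩²⟩/⟨λ−μ⟩² ).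 -/
/-!
Write `a = γ⟨n⟩² ≥ 0`, `z = a + iμ` and `ν = l - μ`. Splitting the kernel integral at `t = 0` and
reflecting the negative half gives (`duhKernel_eq`)
`z K = (L φ u₁ + L φ₋ u₂) - (L φ v₁ + L φ₋ v₂)`,
where `φ₋ t = φ (-t)`, `L ψ w = ∫₀² ψ(t) e^{wt} dt`, and the exponents
`u₁ = -iν`, `u₂ = -2a + iν`, `v₁ = -a - il`, `v₂ = -a + il`
all lie in the closed left half-plane. There `L φ` is bounded and Lipschitz, and two integrations
by parts give `L φ w = -1/w + O(|w|⁻²)` (`halfLaplace_eq`), with a remainder that is Lipschitz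
with the same decay (`LaplaceBounds`).

* If `|z| ≥ 1`, then `1/|z|` is comparable to `1/⟨z⟩` and the two brackets are estimated
  separately (`norm_add_halfLaplace_le`). Since `u₁ + u₂ = v₁ + v₂ = -2a`, the leading terms
  `1/u₁ + 1/u₂` and `1/v₁ + 1/v₂` are `O(a ν⁻²)` and `O(a l⁻²)`, as well as trivially
  `O(|ν|⁻¹)` and `O(|l|⁻¹)`.
* If `|z| < 1`, the factor `1/|z|` has to be absorbed. Here `u₁ - v₁ = z` and `u₂ - v₂ = -z`, so
  the Lipschitz bounds produce a factor `|z|`, as do the leading terms because `a ≤ |z|`. Hence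
  `K = O(⟨l⟩⁻²)` (`norm_sub_halfLaplace_le`), which is dominated by both entries of the minimum.
-/

noncomputable section

open MeasureTheory
open scoped ENNReal

/-- `⟨n⟩² = 1 + |n|²` for `n ∈ ℤ²`. -/
def jbSq (n : ℤ × ℤ) : ℝ := 1 + (n.1 : ℝ) ^ 2 + (n.2 : ℝ) ^ 2

/-- The time-frequency kernel `K_γ(n,λ,μ)` of the time-truncated Duhamel operator of
`∂_t - (γ+i)(Δ-1)` on `𝕋²`, tested against the input mode `e^{itμ} e^{in·x}`. -/
def duhKernel (φ : ℝ → ℝ) (γ : ℝ) (n : ℤ × ℤ) (l μ : ℝ) : ℂ :=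
  ∫ t : ℝ, (φ t : ℂ) * Complex.exp (-(Complex.I * (l : ℂ) * (t : ℂ))) *
    ((Complex.exp (((γ * (t - |t|) * jbSq n : ℝ) : ℂ) + Complex.I * (μ : ℂ) * (t : ℂ)) -
        Complex.exp (-((γ * |t| * jbSq n : ℝ) : ℂ))) /
      (((γ * jbSq n : ℝ) : ℂ) + Complex.I * (μ : ℂ)))

/-- The truncated Laplace transform `∫₀² ψ(t) e^{wt} dt`, used for `Re w ≤ 0`. -/
def halfLaplace (ψ : ℝ → ℝ) (w : ℂ) : ℂ :=
  ∫ t in (0 : ℝ)..2, (ψ t : ℂ) * Complex.exp (w * t)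

/-- The exponential is `1`-Lipschitz on the closed left half-plane. -/
lemma norm_exp_sub_exp_le {x y : ℂ} (hx : x.re ≤ 0) (hy : y.re ≤ 0) :
    ‖Complex.exp x - Complex.exp y‖ ≤ ‖x - y‖ := by
  have := (convex_halfSpace_re_le (0 : ℝ)).norm_image_sub_le_of_norm_deriv_le
    (𝕜 := ℂ) (f := Complex.exp) (C := 1) (x := y) (y := x)
    (fun z _ => Complex.differentiable_exp z)
    (fun z hz => by
      rw [Complex.deriv_exp, Complex.norm_exp]
      exact Real.exp_le_one_iff.2 hz) hy hx
  simpa using this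

lemma norm_exp_mul_le_one {w : ℂ} (hw : w.re ≤ 0) {t : ℝ} (ht : 0 ≤ t) :
    ‖Complex.exp (w * t)‖ ≤ 1 := by
  rw [Complex.norm_exp]
  apply Real.exp_le_one_iff.2
  simpa using mul_nonpos_of_nonpos_of_nonneg hw ht

lemma halfLaplace_norm_le {ψ : ℝ → ℝ} {M : ℝ} (hM : ∀ t ∈ Set.Icc (0 : ℝ) 2, |ψ t| ≤ M)
    {w : ℂ} (hw : w.re ≤ 0) : ‖halfLaplace ψ w‖ ≤ 2 * M := by
  have := intervalIntegral.norm_integral_le_of_norm_le_const (a := (0 : ℝ)) (b := 2) (C := M)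
    (f := fun t : ℝ => (ψ t : ℂ) * Complex.exp (w * t)) (fun t ht => by
      rw [Set.uIoc_of_le (by norm_num)] at ht
      have h1 := hM t ⟨ht.1.le, ht.2⟩
      rw [norm_mul, Complex.norm_real, Real.norm_eq_abs]
      nlinarith [norm_exp_mul_le_one hw ht.1.le, norm_nonneg (Complex.exp (w * t)),
        abs_nonneg (ψ t)])
  unfold halfLaplace
  norm_num at this ⊢
  linarith

lemma halfLaplace_sub_norm_le {ψ : ℝ → ℝ} (hψ : Continuous ψ) {M : ℝ}
    (hM : ∀ t ∈ Set.Icc (0 : ℝ) 2, |ψ t| ≤ M) {w z : ℂ} (hw : w.re ≤ 0) (hz : z.re ≤ 0) :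
    ‖halfLaplace ψ w - halfLaplace ψ z‖ ≤ 4 * M * ‖w - z‖ := by
  have h0 : 0 ≤ M := (abs_nonneg _).trans (hM 0 (by norm_num))
  have hi : ∀ w : ℂ, IntervalIntegrable (fun t : ℝ => (ψ t : ℂ) * Complex.exp (w * t))
      volume 0 2 := fun w => by
    apply Continuous.intervalIntegrable
    fun_prop
  unfold halfLaplace
  rw [← intervalIntegral.integral_sub (hi w) (hi z)]
  have := intervalIntegral.norm_integral_le_of_norm_le_const (a := (0 : ℝ)) (b := 2)
    (C := M * (2 * ‖w - z‖))
    (f := fun t : ℝ => (ψ t : ℂ) * Complex.exp (w * t) - (ψ t : ℂ) * Complex.exp (z * t))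
    (fun t ht => by
      rw [Set.uIoc_of_le (by norm_num)] at ht
      have h1 := hM t ⟨ht.1.le, ht.2⟩
      rw [← mul_sub, norm_mul, Complex.norm_real, Real.norm_eq_abs]
      refine mul_le_mul h1 ?_ (norm_nonneg _) h0
      have hre : ∀ v : ℂ, v.re ≤ 0 → (v * (t : ℂ)).re ≤ 0 := fun v hv => by
        simpa using mul_nonpos_of_nonpos_of_nonneg hv ht.1.le
      refine (norm_exp_sub_exp_le (hre w hw) (hre z hz)).trans ?_
      rw [← sub_mul, norm_mul, Complex.norm_real, Real.norm_eq_abs, abs_of_pos ht.1]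
      nlinarith [norm_nonneg (w - z), ht.2])
  norm_num at this ⊢
  linarith

/-- Two integrations by parts. The boundary terms at `2` vanish, and at `0` only `φ 0 = 1`
contributes because `φ` is constant near `0`. -/
lemma halfLaplace_eq {φ : ℝ → ℝ} (hφ : ContDiff ℝ (⊤ : ℕ∞) φ)
    (hφ1 : ∀ t ∈ Set.Icc (-1 : ℝ) 1, φ t = 1)
    (hφ0 : ∀ t : ℝ, t ∉ Set.Icc (-2 : ℝ) 2 → φ t = 0) {w : ℂ} (hw : w ≠ 0) :
    halfLaplace φ w + 1 / w = halfLaplace (deriv (deriv φ)) w / w ^ 2 := by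
  have hd : ContDiff ℝ (⊤ : ℕ∞) (deriv φ) := (contDiff_infty_iff_deriv.1 hφ).2
  have hdd : ContDiff ℝ (⊤ : ℕ∞) (deriv (deriv φ)) := (contDiff_infty_iff_deriv.1 hd).2
  have c0 := hφ.continuous
  have c1 := hd.continuous
  have c2 := hdd.continuous
  have e0 : φ 0 = 1 := hφ1 0 (by norm_num)
  have e1 : deriv φ 0 = 0 := by
    have : φ =ᶠ[nhds 0] fun _ => (1 : ℝ) := by
      filter_upwards [Icc_mem_nhds (show (-1 : ℝ) < 0 by norm_num) (show (0 : ℝ) < 1 by norm_num)]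
        with t ht using hφ1 t ht
    rw [this.deriv_eq]; simp
  have hz : ∀ t ∈ Set.Ioi (2 : ℝ), φ t = 0 := fun t ht => hφ0 t fun h => not_lt.2 h.2 ht
  have hz' : ∀ t ∈ Set.Ioi (2 : ℝ), deriv φ t = 0 := fun t ht => by
    have : φ =ᶠ[nhds t] fun _ => (0 : ℝ) := by
      filter_upwards [Ioi_mem_nhds ht] with s hs using hz s hs
    rw [this.deriv_eq]; simp
  have ext : ∀ f : ℝ → ℝ, Continuous f → (∀ t ∈ Set.Ioi (2 : ℝ), f t = 0) → f 2 = 0 := by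
    intro f hf h
    have hcl : closure (Set.Ioi (2 : ℝ)) ⊆ {t | f t = 0} :=
      closure_minimal h (isClosed_eq hf continuous_const)
    exact hcl (by rw [closure_Ioi]; exact Set.self_mem_Ici)
  have e2 := ext φ c0 hz
  have e3 := ext _ c1 hz'
  have hder : ∀ t ∈ Set.uIcc (0 : ℝ) 2, HasDerivAt
      (fun t : ℝ => Complex.exp (w * t) * ((φ t : ℂ) / w - ((deriv φ t : ℝ) : ℂ) / w ^ 2))
      ((φ t : ℂ) * Complex.exp (w * t) -
        ((deriv (deriv φ) t : ℝ) : ℂ) * Complex.exp (w * t) / w ^ 2) t := fun t _ => by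
    have a0 : HasDerivAt (fun t : ℝ => (φ t : ℂ)) ((deriv φ t : ℝ) : ℂ) t :=
      ((hφ.differentiable (by simp)) t).hasDerivAt.ofReal_comp
    have a1 : HasDerivAt (fun t : ℝ => ((deriv φ t : ℝ) : ℂ)) ((deriv (deriv φ) t : ℝ) : ℂ) t :=
      ((hd.differentiable (by simp)) t).hasDerivAt.ofReal_comp
    have a2 : HasDerivAt (fun t : ℝ => Complex.exp (w * t)) (Complex.exp (w * t) * (w * 1)) t :=
      ((Complex.ofRealCLM.hasDerivAt (x := t)).const_mul w).cexp
    refine (a2.mul ((a0.div_const w).sub (a1.div_const (w ^ 2)))).congr_deriv ?_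
    simp only [Pi.sub_apply]
    field_simp
    ring
  have hI : ∀ f : ℝ → ℝ, Continuous f →
      IntervalIntegrable (fun t : ℝ => (f t : ℂ) * Complex.exp (w * t)) volume 0 2 := fun f hf => by
    apply Continuous.intervalIntegrable
    fun_prop
  have key := intervalIntegral.integral_eq_sub_of_hasDerivAt hder
    ((hI _ c0).sub ((hI _ c2).div_const _))
  rw [intervalIntegral.integral_sub (hI _ c0) ((hI _ c2).div_const _),
    intervalIntegral.integral_div] at key
  unfold halfLaplace
  simp only [e0, e1, e2, e3] at key
  simp at key
  linear_combination key

/-- The estimates on `halfLaplace φ` from which the kernel bound follows: a crude bound, a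
Lipschitz bound, and the same two bounds, now with decay, for the remainder after the leading
term `-1 / w` has been removed. The last bound carries a lower bound `r ≥ 1` for both moduli. -/
structure LaplaceBounds (φ : ℝ → ℝ) (M : ℝ) : Prop where
  bdd : ∀ w : ℂ, w.re ≤ 0 → ‖halfLaplace φ w‖ ≤ 2 * M
  lip : ∀ u v : ℂ, u.re ≤ 0 → v.re ≤ 0 →
    ‖halfLaplace φ u - halfLaplace φ v‖ ≤ 4 * M * ‖u - v‖
  rem : ∀ w : ℂ, w.re ≤ 0 → w ≠ 0 → ‖halfLaplace φ w + 1 / w‖ ≤ 2 * M / ‖w‖ ^ 2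
  rem_lip : ∀ (u v : ℂ) (r : ℝ), 1 ≤ r → u.re ≤ 0 → v.re ≤ 0 → r ≤ ‖u‖ → r ≤ ‖v‖ →
    ‖(halfLaplace φ u + 1 / u) - (halfLaplace φ v + 1 / v)‖ ≤ 8 * M * ‖u - v‖ / r ^ 2

lemma exists_laplaceBounds {φ : ℝ → ℝ} (hφ : ContDiff ℝ (⊤ : ℕ∞) φ)
    (hφ1 : ∀ t ∈ Set.Icc (-1 : ℝ) 1, φ t = 1)
    (hφ0 : ∀ t : ℝ, t ∉ Set.Icc (-2 : ℝ) 2 → φ t = 0) :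
    ∃ M₀ : ℝ, ∀ M, M₀ ≤ M → LaplaceBounds φ M := by
  have hd : ContDiff ℝ (⊤ : ℕ∞) (deriv φ) := (contDiff_infty_iff_deriv.1 hφ).2
  have hdd : ContDiff ℝ (⊤ : ℕ∞) (deriv (deriv φ)) := (contDiff_infty_iff_deriv.1 hd).2
  obtain ⟨A, hA⟩ := (isCompact_Icc (a := (0 : ℝ)) (b := 2)).exists_bound_of_continuousOn
    hφ.continuous.continuousOn
  obtain ⟨B, hB⟩ := (isCompact_Icc (a := (0 : ℝ)) (b := 2)).exists_bound_of_continuousOn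
    hdd.continuous.continuousOn
  refine ⟨max A B, fun M hM => ?_⟩
  have h1 : ∀ t ∈ Set.Icc (0 : ℝ) 2, |φ t| ≤ M :=
    fun t ht => (hA t ht).trans ((le_max_left _ _).trans hM)
  have h2 : ∀ t ∈ Set.Icc (0 : ℝ) 2, |deriv (deriv φ) t| ≤ M :=
    fun t ht => (hB t ht).trans ((le_max_right _ _).trans hM)
  have hM0 : 0 ≤ M := (abs_nonneg _).trans (h1 0 (by norm_num))
  refine ⟨fun w hw => halfLaplace_norm_le h1 hw,
    fun u v hu hv => halfLaplace_sub_norm_le hφ.continuous h1 hu hv, fun w hw hw0 => ?_, ?_⟩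
  · rw [halfLaplace_eq hφ hφ1 hφ0 hw0, norm_div, norm_pow]
    gcongr
    exact halfLaplace_norm_le h2 hw
  · intro u v r hr hu hv hur hvr
    have hr0 : 0 < r := by linarith
    have hu0 : u ≠ 0 := norm_pos_iff.1 (hr0.trans_le hur)
    have hv0 : v ≠ 0 := norm_pos_iff.1 (hr0.trans_le hvr)
    have hup : 0 < ‖u‖ := norm_pos_iff.2 hu0
    have hvp : 0 < ‖v‖ := norm_pos_iff.2 hv0
    rw [halfLaplace_eq hφ hφ1 hφ0 hu0, halfLaplace_eq hφ hφ1 hφ0 hv0]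
    set P := halfLaplace (deriv (deriv φ))
    have e : P u / u ^ 2 - P v / v ^ 2 = (P u - P v) / u ^ 2
        + P v * (u - v) * (-(1 / (u * v ^ 2)) - 1 / (u ^ 2 * v)) := by
      field_simp
      ring
    have b1 : ‖(P u - P v) / u ^ 2‖ ≤ 4 * M * ‖u - v‖ / r ^ 2 := by
      rw [norm_div, norm_pow]
      gcongr
      exact halfLaplace_sub_norm_le hdd.continuous h2 hu hv
    have b2 : ‖-(1 / (u * v ^ 2)) - 1 / (u ^ 2 * v)‖ ≤ 2 / r ^ 2 := by
      refine (norm_sub_le _ _).trans ?_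
      rw [norm_neg, norm_div, norm_div, norm_mul, norm_mul, norm_pow, norm_pow, norm_one]
      have c1 : 1 / (‖u‖ * ‖v‖ ^ 2) ≤ 1 / r ^ 2 := by
        refine one_div_le_one_div_of_le (by positivity) ?_
        calc r ^ 2 = 1 * r ^ 2 := by ring
          _ ≤ ‖u‖ * ‖v‖ ^ 2 := by gcongr; linarith
      have c2 : 1 / (‖u‖ ^ 2 * ‖v‖) ≤ 1 / r ^ 2 := by
        refine one_div_le_one_div_of_le (by positivity) ?_
        calc r ^ 2 = r ^ 2 * 1 := by ring
          _ ≤ ‖u‖ ^ 2 * ‖v‖ := by gcongr; linarith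
      calc _ ≤ 1 / r ^ 2 + 1 / r ^ 2 := add_le_add c1 c2
        _ = 2 / r ^ 2 := by ring
    rw [e]
    refine (norm_add_le _ _).trans ?_
    rw [norm_mul (P v * (u - v)), norm_mul]
    calc _ ≤ 4 * M * ‖u - v‖ / r ^ 2 + 2 * M * ‖u - v‖ * (2 / r ^ 2) := by
          gcongr
          exact halfLaplace_norm_le h2 hv
      _ = 8 * M * ‖u - v‖ / r ^ 2 := by ring

/-- On each half-line the integrand of the kernel is a combination of two exponentials; the
half-line `t ≤ 0` is reflected onto `t ≥ 0`, which replaces `φ` by `t ↦ φ (-t)`. -/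
lemma duhKernel_eq {φ : ℝ → ℝ} (hφ : Continuous φ)
    (hφ0 : ∀ t : ℝ, t ∉ Set.Icc (-2 : ℝ) 2 → φ t = 0) (γ : ℝ) (n : ℤ × ℤ) (l μ : ℝ) :
    duhKernel φ γ n l μ =
      ((halfLaplace φ (-Complex.I * ((l - μ : ℝ) : ℂ)) +
          halfLaplace (fun t => φ (-t))
            (-2 * ((γ * jbSq n : ℝ) : ℂ) + Complex.I * ((l - μ : ℝ) : ℂ))) -
        (halfLaplace φ (-((γ * jbSq n : ℝ) : ℂ) - Complex.I * (l : ℂ)) +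
          halfLaplace (fun t => φ (-t)) (-((γ * jbSq n : ℝ) : ℂ) + Complex.I * (l : ℂ)))) /
      (((γ * jbSq n : ℝ) : ℂ) + Complex.I * (μ : ℂ)) := by
  unfold duhKernel
  set z : ℂ := ((γ * jbSq n : ℝ) : ℂ) + Complex.I * (μ : ℂ) with hz
  set F : ℝ → ℂ := fun t => (φ t : ℂ) * Complex.exp (-(Complex.I * (l : ℂ) * (t : ℂ))) *
    ((Complex.exp (((γ * (t - |t|) * jbSq n : ℝ) : ℂ) + Complex.I * (μ : ℂ) * (t : ℂ)) -
        Complex.exp (-((γ * |t| * jbSq n : ℝ) : ℂ))) / z) with hF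
  have hcF : Continuous F := by
    rw [hF]
    fun_prop
  have h1 : ∫ t, F t = ∫ t in (-2 : ℝ)..2, F t := by
    rw [intervalIntegral.integral_of_le (by norm_num), ← integral_Icc_eq_integral_Ioc,
      setIntegral_eq_integral_of_forall_compl_eq_zero]
    intro t ht
    simp [hF, hφ0 t ht]
  have h2 : ∫ t in (-2 : ℝ)..0, F t = ∫ t in (0 : ℝ)..2, F (-t) := by
    rw [intervalIntegral.integral_comp_neg]
    simp
  have hI : ∀ (f : ℝ → ℝ) (w : ℂ), Continuous f →
      IntervalIntegrable (fun t : ℝ => (f t : ℂ) * Complex.exp (w * t)) volume 0 2 :=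
    fun f w hf => by
      apply Continuous.intervalIntegrable
      fun_prop
  have split : ∀ (f : ℝ → ℝ) (w v : ℂ), Continuous f →
      ∫ t in (0 : ℝ)..2, ((f t : ℂ) * Complex.exp (w * t) - (f t : ℂ) * Complex.exp (v * t)) / z
        = (halfLaplace f w - halfLaplace f v) / z := by
    intro f w v hf
    rw [intervalIntegral.integral_div, intervalIntegral.integral_sub (hI f w hf) (hI f v hf)]
    rfl
  have expc : ∀ p a b c d e : ℂ, a + b = d → a + c = e →
      p * Complex.exp a * ((Complex.exp b - Complex.exp c) / z) =
        (p * Complex.exp d - p * Complex.exp e) / z := by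
    rintro p a b c d e rfl rfl
    rw [Complex.exp_add, Complex.exp_add]
    ring
  have h3 : ∫ t in (0 : ℝ)..2, F t = (halfLaplace φ (-Complex.I * ((l - μ : ℝ) : ℂ)) -
      halfLaplace φ (-((γ * jbSq n : ℝ) : ℂ) - Complex.I * (l : ℂ))) / z := by
    rw [← split _ _ _ hφ]
    apply intervalIntegral.integral_congr
    intro t ht
    rw [Set.uIcc_of_le (by norm_num)] at ht
    simp only [hF, abs_of_nonneg ht.1]
    apply expc <;> push_cast <;> ring
  have h4 : ∫ t in (0 : ℝ)..2, F (-t) = (halfLaplace (fun t => φ (-t))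
        (-2 * ((γ * jbSq n : ℝ) : ℂ) + Complex.I * ((l - μ : ℝ) : ℂ)) -
      halfLaplace (fun t => φ (-t)) (-((γ * jbSq n : ℝ) : ℂ) + Complex.I * (l : ℂ))) / z := by
    rw [← split _ _ _ (by fun_prop)]
    apply intervalIntegral.integral_congr
    intro t ht
    rw [Set.uIcc_of_le (by norm_num)] at ht
    simp only [hF, abs_neg, abs_of_nonneg ht.1]
    apply expc <;> push_cast <;> ring
  change ∫ t, F t = _
  rw [h1, ← intervalIntegral.integral_add_adjacent_intervals (b := 0)
    (hcF.intervalIntegrable _ _) (hcF.intervalIntegrable _ _), h2, h3, h4]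
  ring

lemma jb_sq (x : ℝ) : jb x ^ 2 = 1 + x ^ 2 := Real.sq_sqrt (by positivity)

lemma le_jb (x : ℝ) : x ≤ jb x := Real.le_sqrt_of_sq_le (by linarith)

/-- One half of the numerator of the kernel: the two half-lines glued together. Because
`u + v = O(a)`, the leading terms `-1 / u` and `-1 / v` nearly cancel, which gains the second
power of `⟨ν⟩` at the cost of one power of `⟨a⟩`. -/
lemma norm_add_halfLaplace_le {φ ψ : ℝ → ℝ} {M : ℝ} (hM : 1 ≤ M) (hφ : LaplaceBounds φ M)
    (hψ : LaplaceBounds ψ M) {a ν : ℝ} {u v : ℂ} (hu : u.re ≤ 0) (hv : v.re ≤ 0)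
    (hui : u.im = -ν) (hvi : v.im = ν) (huv : ‖u + v‖ ≤ 2 * a) :
    ‖halfLaplace φ u + halfLaplace ψ v‖ ≤ 16 * M * min (1 / jb ν) (jb a / jb ν ^ 2) := by
  have ja := one_le_jb a
  have ja' := le_jb a
  have jn := one_le_jb ν
  have jn2 := jb_sq ν
  have hMa : 1 * 1 ≤ M * jb a := by gcongr
  have hMa' : M ≤ M * jb a := by nlinarith
  have haM : a ≤ M * jb a := by nlinarith
  rw [mul_min_of_nonneg _ _ (by linarith), mul_div_assoc', mul_div_assoc']
  rcases le_or_gt |ν| 1 with h | h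
  · have hν : ν ^ 2 ≤ 1 := by rw [← sq_abs]; nlinarith [abs_nonneg ν]
    have hb : ‖halfLaplace φ u + halfLaplace ψ v‖ ≤ 4 * M :=
      (norm_add_le _ _).trans (by linarith [hφ.bdd u hu, hψ.bdd v hv])
    refine hb.trans (le_min ?_ ?_)
    · rw [le_div_iff₀ (by linarith)]
      nlinarith
    · rw [le_div_iff₀ (by nlinarith)]
      nlinarith
  · have hur : |ν| ≤ ‖u‖ := by simpa [hui] using Complex.abs_im_le_norm u
    have hvr : |ν| ≤ ‖v‖ := by simpa [hvi] using Complex.abs_im_le_norm v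
    set s := |ν| with hs
    have hs0 : 0 < s := by linarith
    have hs2 : ν ^ 2 = s ^ 2 := (sq_abs ν).symm
    have hu0 : u ≠ 0 := norm_pos_iff.1 (hs0.trans_le hur)
    have hv0 : v ≠ 0 := norm_pos_iff.1 (hs0.trans_le hvr)
    have e : halfLaplace φ u + halfLaplace ψ v =
        (halfLaplace φ u + 1 / u) + (halfLaplace ψ v + 1 / v) - (1 / u + 1 / v) := by ring
    have r1 : ‖halfLaplace φ u + 1 / u‖ ≤ 2 * M / s ^ 2 :=
      (hφ.rem u hu hu0).trans (by gcongr)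
    have r2 : ‖halfLaplace ψ v + 1 / v‖ ≤ 2 * M / s ^ 2 :=
      (hψ.rem v hv hv0).trans (by gcongr)
    have r3 : ‖1 / u + 1 / v‖ ≤ 2 * a / s ^ 2 := by
      have : 1 / u + 1 / v = (u + v) / (u * v) := by field_simp; ring
      rw [this, norm_div, norm_mul]
      have : s ^ 2 ≤ ‖u‖ * ‖v‖ := by rw [sq]; gcongr
      gcongr
      exact (norm_nonneg _).trans huv
    have r4 : ‖1 / u + 1 / v‖ ≤ 2 / s := by
      refine (norm_add_le _ _).trans ?_
      rw [norm_div, norm_div, norm_one]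
      calc 1 / ‖u‖ + 1 / ‖v‖ ≤ 1 / s + 1 / s := by gcongr
        _ = 2 / s := by ring
    have hn : ‖halfLaplace φ u + halfLaplace ψ v‖ ≤ 4 * M / s ^ 2 + ‖1 / u + 1 / v‖ := by
      rw [e]
      refine (norm_sub_le _ _).trans (add_le_add_left ((norm_add_le _ _).trans ?_) _)
      calc _ ≤ 2 * M / s ^ 2 + 2 * M / s ^ 2 := add_le_add r1 r2
        _ = 4 * M / s ^ 2 := by ring
    refine le_min (hn.trans ?_) (hn.trans ?_)
    · have hj : jb ν ≤ 2 * s := by nlinarith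
      calc 4 * M / s ^ 2 + ‖1 / u + 1 / v‖ ≤ 4 * M / s + 2 / s := by
            refine add_le_add ?_ r4
            gcongr
            nlinarith
        _ ≤ 8 * M / s := by rw [← add_div]; gcongr; linarith
        _ ≤ 16 * M * 1 / jb ν := by
            rw [div_le_div_iff₀ hs0 (by linarith)]
            nlinarith
    · calc 4 * M / s ^ 2 + ‖1 / u + 1 / v‖ ≤ 4 * M / s ^ 2 + 2 * a / s ^ 2 := by gcongr
        _ ≤ 8 * (M * jb a) / s ^ 2 := by rw [← add_div]; gcongr; linarith
        _ ≤ 16 * M * jb a / jb ν ^ 2 := by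
            rw [div_le_div_iff₀ (by positivity) (by positivity), jn2, hs2]
            nlinarith [mul_le_mul_of_nonneg_left (show 1 + s ^ 2 ≤ 2 * s ^ 2 by nlinarith)
              (show 0 ≤ 8 * (M * jb a) by linarith)]

/-- The numerator of the kernel is `O(‖z‖ ⟨l⟩⁻²)` when `z = a + iμ` is small, since the
exponents `u₁, v₁` and `u₂, v₂` then differ by `± z`. -/
lemma norm_sub_halfLaplace_le {φ ψ : ℝ → ℝ} {M : ℝ} (hM : 1 ≤ M) (hφ : LaplaceBounds φ M)
    (hψ : LaplaceBounds ψ M) {l μ a : ℝ} (hμ : |μ| ≤ 1) {u₁ u₂ v₁ v₂ z : ℂ}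
    (hu₁ : u₁.re ≤ 0) (hu₂ : u₂.re ≤ 0) (hv₁ : v₁.re ≤ 0) (hv₂ : v₂.re ≤ 0)
    (hiu₁ : u₁.im = -(l - μ)) (hiu₂ : u₂.im = l - μ) (hiv₁ : v₁.im = -l) (hiv₂ : v₂.im = l)
    (hsu : ‖u₁ + u₂‖ ≤ 2 * a) (hsv : ‖v₁ + v₂‖ ≤ 2 * a) (haz : a ≤ ‖z‖)
    (h₁ : ‖u₁ - v₁‖ = ‖z‖) (h₂ : ‖u₂ - v₂‖ = ‖z‖) :
    ‖(halfLaplace φ u₁ + halfLaplace ψ u₂) - (halfLaplace φ v₁ + halfLaplace ψ v₂)‖ ≤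
      100 * M * ‖z‖ / jb l ^ 2 := by
  have hz := norm_nonneg z
  have hMz : ‖z‖ ≤ M * ‖z‖ := by nlinarith
  have jl := one_le_jb l
  rcases le_or_gt |l| 2 with h | h
  · have hl : l ^ 2 ≤ 4 := by rw [← sq_abs]; nlinarith [abs_nonneg l]
    have e : (halfLaplace φ u₁ + halfLaplace ψ u₂) - (halfLaplace φ v₁ + halfLaplace ψ v₂) =
      (halfLaplace φ u₁ - halfLaplace φ v₁) + (halfLaplace ψ u₂ - halfLaplace ψ v₂) := by ring
    have b₁ := hφ.lip u₁ v₁ hu₁ hv₁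
    have b₂ := hψ.lip u₂ v₂ hu₂ hv₂
    rw [h₁] at b₁
    rw [h₂] at b₂
    rw [e, le_div_iff₀ (by positivity), jb_sq]
    have := (norm_add_le (halfLaplace φ u₁ - halfLaplace φ v₁)
      (halfLaplace ψ u₂ - halfLaplace ψ v₂))
    calc _ ≤ (8 * (M * ‖z‖)) * 5 := by gcongr <;> linarith
      _ ≤ _ := by linarith
  · set r := |l| / 2 with hr
    have hr1 : 1 ≤ r := by linarith
    have hν : r ≤ |l - μ| := by
      have := abs_sub_abs_le_abs_sub l μ
      linarith
    have hl : r ≤ |l| := by linarith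
    have key : ∀ w : ℂ, ∀ x : ℝ, (w.im = x ∨ w.im = -x) → r ≤ |x| → r ≤ ‖w‖ := by
      rintro w x (hw | hw) hx
      · exact hx.trans (by simpa [hw] using Complex.abs_im_le_norm w)
      · exact hx.trans (by simpa [hw] using Complex.abs_im_le_norm w)
    have n₁ := key u₁ _ (Or.inr hiu₁) hν
    have n₂ := key u₂ _ (Or.inl hiu₂) hν
    have n₃ := key v₁ _ (Or.inr hiv₁) hl
    have n₄ := key v₂ _ (Or.inl hiv₂) hl
    have inv : ∀ u v : ℂ, r ≤ ‖u‖ → r ≤ ‖v‖ → ‖u + v‖ ≤ 2 * a →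
        ‖1 / u + 1 / v‖ ≤ 2 * ‖z‖ / r ^ 2 := by
      intro u v hu hv huv
      have hu0 : u ≠ 0 := norm_pos_iff.1 (by linarith)
      have hv0 : v ≠ 0 := norm_pos_iff.1 (by linarith)
      have : 1 / u + 1 / v = (u + v) / (u * v) := by field_simp; ring
      rw [this, norm_div, norm_mul]
      have : r ^ 2 ≤ ‖u‖ * ‖v‖ := by rw [sq]; gcongr
      have : ‖u + v‖ ≤ 2 * ‖z‖ := by linarith
      gcongr
    have e : (halfLaplace φ u₁ + halfLaplace ψ u₂) - (halfLaplace φ v₁ + halfLaplace ψ v₂) =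
      ((halfLaplace φ u₁ + 1 / u₁) - (halfLaplace φ v₁ + 1 / v₁)) +
      ((halfLaplace ψ u₂ + 1 / u₂) - (halfLaplace ψ v₂ + 1 / v₂)) +
      ((1 / v₁ + 1 / v₂) - (1 / u₁ + 1 / u₂)) := by ring
    have b₁ := hφ.rem_lip u₁ v₁ r hr1 hu₁ hv₁ n₁ n₃
    have b₂ := hψ.rem_lip u₂ v₂ r hr1 hu₂ hv₂ n₂ n₄
    rw [h₁] at b₁
    rw [h₂] at b₂
    have b₃ := (norm_sub_le _ _).trans
      (add_le_add (inv v₁ v₂ n₃ n₄ hsv) (inv u₁ u₂ n₁ n₂ hsu))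
    rw [e]
    refine (norm_add₃_le.trans (add_le_add (add_le_add b₁ b₂) b₃)).trans ?_
    have hlr : jb l ^ 2 ≤ 5 * r ^ 2 := by
      rw [jb_sq, ← sq_abs l, show |l| = 2 * r by linarith]
      nlinarith
    calc _ = (16 * (M * ‖z‖) + 4 * ‖z‖) / r ^ 2 := by ring
      _ ≤ 20 * (M * ‖z‖) / r ^ 2 := by gcongr; linarith
      _ ≤ 100 * M * ‖z‖ / jb l ^ 2 := by
        rw [div_le_div_iff₀ (by positivity) (by positivity)]
        nlinarith [mul_le_mul_of_nonneg_left hlr (show 0 ≤ 20 * (M * ‖z‖) by linarith)]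

/-- The kernel estimate (3.30) inside Proposition 3.3: for a fixed smooth cutoff `φ`,
`|K_γ(n,λ,μ)| ≤ (C/⟨γ⟨n⟩²+iμ⟩) min( ⟨λ⟩⁻¹+⟨λ-μ⟩⁻¹ , ⟨γ⟨n⟩²⟩⟨λ⟩⁻²+⟨γ⟨n⟩²⟩⟨λ-μ⟩⁻² )`,
uniformly in `γ ∈ [0,1]`, `n ∈ ℤ²` and `λ, μ ∈ ℝ` (whenever `γ⟨n⟩² + iμ ≠ 0`). -/
theorem duhamel_kernel_bound (φ : ℝ → ℝ) (hφ : ContDiff ℝ (⊤ : ℕ∞) φ)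
    (hφ1 : ∀ t ∈ Set.Icc (-1 : ℝ) 1, φ t = 1)
    (hφ0 : ∀ t : ℝ, t ∉ Set.Icc (-2 : ℝ) 2 → φ t = 0) :
    ∃ C > (0 : ℝ), ∀ γ ∈ Set.Icc (0 : ℝ) 1, ∀ (n : ℤ × ℤ) (l μ : ℝ),
      (((γ * jbSq n : ℝ) : ℂ) + Complex.I * (μ : ℂ)) ≠ 0 →
      ‖duhKernel φ γ n l μ‖
        ≤ C / Real.sqrt (1 + (γ * jbSq n) ^ 2 + μ ^ 2) *
          min (1 / jb l + 1 / jb (l - μ))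
            (jb (γ * jbSq n) / jb l ^ 2 + jb (γ * jbSq n) / jb (l - μ) ^ 2) := by
  obtain ⟨M₁, hM₁⟩ := exists_laplaceBounds hφ hφ1 hφ0
  obtain ⟨M₂, hM₂⟩ := exists_laplaceBounds (φ := fun t => φ (-t)) (hφ.comp contDiff_neg)
    (fun t ht => hφ1 _ ⟨by linarith [ht.2], by linarith [ht.1]⟩)
    (fun t ht => hφ0 _ fun h => ht ⟨by linarith [h.2], by linarith [h.1]⟩)
  set M := max 1 (max M₁ M₂) with hMdef
  have hM : 1 ≤ M := le_max_left _ _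
  have bφ : LaplaceBounds φ M := hM₁ M ((le_max_left _ _).trans (le_max_right _ _))
  have bψ : LaplaceBounds (fun t => φ (-t)) M :=
    hM₂ M ((le_max_right _ _).trans (le_max_right _ _))
  refine ⟨200 * M, by positivity, fun γ hγ n l μ hz => ?_⟩
  have ha : 0 ≤ γ * jbSq n := mul_nonneg hγ.1 (by unfold jbSq; positivity)
  rw [duhKernel_eq hφ.continuous hφ0]
  generalize γ * jbSq n = a at ha hz
  set z : ℂ := (a : ℂ) + Complex.I * (μ : ℂ) with hzdef
  have hzn : ‖z‖ ^ 2 = a ^ 2 + μ ^ 2 := by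
    rw [Complex.sq_norm, Complex.normSq_apply]
    simp [hzdef]
    ring
  have hzp : 0 < ‖z‖ := norm_pos_iff.2 hz
  have haz : a ≤ ‖z‖ := by nlinarith
  set S := Real.sqrt (1 + a ^ 2 + μ ^ 2) with hS
  have hS2 : S ^ 2 = 1 + ‖z‖ ^ 2 := by
    rw [hS, Real.sq_sqrt (by positivity), hzn]
    ring
  have hSp : 0 < S := Real.sqrt_pos.2 (by positivity)
  set u₁ : ℂ := -Complex.I * ((l - μ : ℝ) : ℂ) with hu₁
  set u₂ : ℂ := -2 * (a : ℂ) + Complex.I * ((l - μ : ℝ) : ℂ) with hu₂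
  set v₁ : ℂ := -(a : ℂ) - Complex.I * (l : ℂ) with hv₁
  set v₂ : ℂ := -(a : ℂ) + Complex.I * (l : ℂ) with hv₂
  have ru₁ : u₁.re ≤ 0 := by simp [hu₁]
  have ru₂ : u₂.re ≤ 0 := by simp [hu₂, ha]
  have rv₁ : v₁.re ≤ 0 := by simp [hv₁, ha]
  have rv₂ : v₂.re ≤ 0 := by simp [hv₂, ha]
  have iu₁ : u₁.im = -(l - μ) := by simp [hu₁]
  have iu₂ : u₂.im = l - μ := by simp [hu₂]
  have iv₁ : v₁.im = -l := by simp [hv₁]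
  have iv₂ : v₂.im = l := by simp [hv₂]
  have nneg : ‖(-2 * (a : ℂ))‖ = 2 * a := by simp [abs_of_nonneg ha]
  have su : ‖u₁ + u₂‖ ≤ 2 * a := by
    rw [show u₁ + u₂ = -2 * (a : ℂ) by rw [hu₁, hu₂]; ring, nneg]
  have sv : ‖v₁ + v₂‖ ≤ 2 * a := by
    rw [show v₁ + v₂ = -2 * (a : ℂ) by rw [hv₁, hv₂]; ring, nneg]
  have j1 := one_le_jb l
  have j2 := one_le_jb (l - μ)
  have ja := one_le_jb a
  rw [norm_div, div_mul_eq_mul_div, div_le_div_iff₀ hzp hSp]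
  rcases le_or_gt 1 ‖z‖ with h | h
  · have b₁ := norm_add_halfLaplace_le hM bφ bψ ru₁ ru₂ iu₁ iu₂ su
    have b₂ := norm_add_halfLaplace_le hM bφ bψ rv₁ rv₂ iv₁ iv₂ sv
    have hmin : min (1 / jb (l - μ)) (jb a / jb (l - μ) ^ 2) + min (1 / jb l) (jb a / jb l ^ 2) ≤
        min (1 / jb l + 1 / jb (l - μ)) (jb a / jb l ^ 2 + jb a / jb (l - μ) ^ 2) :=
      le_min
        ((add_le_add (min_le_left _ _) (min_le_left _ _)).trans_eq (add_comm _ _))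
        ((add_le_add (min_le_right _ _) (min_le_right _ _)).trans_eq (add_comm _ _))
    have hS' : S ≤ 2 * ‖z‖ := by nlinarith
    set m := min (1 / jb l + 1 / jb (l - μ)) (jb a / jb l ^ 2 + jb a / jb (l - μ) ^ 2)
    have hm : 0 ≤ m := le_min (by positivity) (by positivity)
    have hMm : 0 ≤ M * m * ‖z‖ := by positivity
    calc _ ≤ (16 * M * m) * (2 * ‖z‖) := by
          gcongr
          refine (norm_sub_le _ _).trans ((add_le_add b₁ b₂).trans ?_)
          rw [← mul_add]
          gcongr
      _ ≤ 200 * M * m * ‖z‖ := by linarith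
  · -- `S = ⟨z⟩` is at most `2`, so only the decay in `l` is needed.
    have hμ : |μ| ≤ 1 := abs_le_one_iff_mul_self_le_one.2 (by nlinarith)
    have d₁ : ‖u₁ - v₁‖ = ‖z‖ := by
      rw [show u₁ - v₁ = z by rw [hu₁, hv₁, hzdef]; push_cast; ring]
    have d₂ : ‖u₂ - v₂‖ = ‖z‖ := by
      rw [show u₂ - v₂ = -z by rw [hu₂, hv₂, hzdef]; push_cast; ring, norm_neg]
    have b := norm_sub_halfLaplace_le hM bφ bψ hμ ru₁ ru₂ rv₁ rv₂ iu₁ iu₂ iv₁ iv₂ su sv haz d₁ d₂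
    have hS' : S ≤ 2 := by nlinarith
    have hm : 1 / jb l ^ 2 ≤
        min (1 / jb l + 1 / jb (l - μ)) (jb a / jb l ^ 2 + jb a / jb (l - μ) ^ 2) := by
      refine le_min ?_ ?_
      · have : 1 / jb l ^ 2 ≤ 1 / jb l := by
          gcongr
          nlinarith
        have : 0 ≤ 1 / jb (l - μ) := by positivity
        linarith
      · have : 1 / jb l ^ 2 ≤ jb a / jb l ^ 2 := by gcongr
        have : 0 ≤ jb a / jb (l - μ) ^ 2 := by positivity
        linarith
    calc _ ≤ 100 * M * ‖z‖ / jb l ^ 2 * 2 := by gcongr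
      _ = 200 * M * (1 / jb l ^ 2) * ‖z‖ := by ring
      _ ≤ _ := by gcongr
end
end

section
/- Let N₁ ≥ N₂ ≥ N₃ ≥ 1 be real numbers, let ι₁, ι₂, ι₃ ∈ {−1, +1}, and let a, b, c, d ∈ ℤ² and α ∈ ℤ. Let S be the set of triples (x,y,z) ∈ (ℤ²)³ such that: ι₁x + ι₂y + ι₃z = d; ι₁⟨x⟩² + ι₂⟨y⟩² + ι₃⟨z⟩² = α; |x − a| ≤ N₁, |y − b| ≤ N₂, |z − c| ≤ N₃; and no pairing occurs, i.e. if ι₁ = −ι₂ then x ≠ y, if ι₂ = −ι₃ then y ≠ z, and if ι₁ = −ι₃ then x ≠ z. Then for every θ > 0 there exists a constant C = C(θ) > 0, independent of a, b, c, d, α, N₁, N₂, N₃, such that the cardinality of S satisfies |S| ≤ C · N₂^{1+θ} · N₃. -/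
/-! The triple is determined by `(y, z)`, and there are `O(N₃²)` choices of `z`, so the task is to count,
for fixed `z`, the admissible `y` in a ball of radius `N₂`. Put `u(z) = ι₁ d - ι₁ ι₃ z`, which is
`x + y` or `x - y` according to whether `ι₁ = ι₂` or `ι₁ = -ι₂`. The two cases behave differently.

If `ι₁ = ι₂`, then `w = u(z) - 2y = x - y` has `|w|²` prescribed by `z`, so `w` is a lattice point on
a fixed circle inside a box of side `O(N₂)`. The lemma `circle_count` bounds the number of such points
by `O(R ^ ε)` for a box of side `O(R)` with arbitrary centre. When the circle has squared radius
`m ≫ R⁶`, a short arc carries at most two lattice points: a lattice triangle has area at least `1/2`,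
and the circumradius formula forces `4m ≤ |AB|²|BC|²|CA|²` (`circle_three`). When `m ≪ R⁶`, the number
of Gaussian integers of norm `m` is at most `4 d(m)` (`card_norm_eq_le`), and `d(m) ≪ m ^ ε`
(`divisor_bound`). Multiplying by the `O(N₃²)` values of `z` gives `O(N₃² N₂ ^ θ)`.

If `ι₁ = -ι₂`, then `|x|² - |y|² = |u|² + 2 u · y` is prescribed by `z`, so `y` lies on a line
orthogonal to `u = u(z) = x - y`, which is nonzero because `x` and `y` are not paired. With
`u = gcd(u) u'` and `u'` primitive of sup norm `h(u)`, such a line has at most `1 + 2 N₂ / h(u)` lattice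
points in the box (`line_count`). As `z` varies, `u(z)` runs injectively through a box of side
`2 N₃`, and `∑ 1 / h(u) ≪ N₃ (1 + log N₃)` over the nonzero points of such a box, wherever it is
centred (`sum_inv_height_le`): there are `O(k)` primitive vectors of sup norm `k`, each with
`O(N₃ / k)` multiples in the box when `k ≤ N₃`, while the vectors with `h(u) > N₃` contribute
`O(N₃² / N₃)`. The total is `O(N₃² + N₂ N₃ (1 + log N₃))`.
-/


noncomputable section

/-- Euclidean norm of a lattice point in `ℤ²`. -/
def enormZ (m : ℤ × ℤ) : ℝ := Real.sqrt ((m.1 : ℝ) ^ 2 + (m.2 : ℝ) ^ 2)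

/-- `⟨n⟩² = 1 + |n|²` as an integer, for `n ∈ ℤ²`. -/
def jbSqInt (n : ℤ × ℤ) : ℤ := 1 + n.1 ^ 2 + n.2 ^ 2

/-! ### Gaussian integers of given norm -/

/-- When `p` is the norm of some `π`, each factor `p` of the norm of `w` splits off a factor `π` or
`star π` of `w`. -/
lemma split_prime_factor {p : ℕ} (hp : p.Prime) {π : GaussianInt} (hπ : π.norm = p) (k : ℕ) :
    ∀ (n : ℤ) (w : GaussianInt), w.norm = (p : ℤ) ^ k * n →
      ∃ j ≤ k, ∃ w' : GaussianInt, w = π ^ j * star π ^ (k - j) * w' ∧ w'.norm = n := by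
  have hp0 : (p : ℤ) ≠ 0 := by exact_mod_cast hp.ne_zero
  have hirr : Irreducible π := by
    refine ⟨fun hu => ?_, fun x y hxy => ?_⟩
    · have := Zsqrtd.norm_eq_one_iff.2 hu
      rw [hπ] at this
      exact hp.one_lt.ne' (by simpa using this)
    · have h : x.norm.natAbs * y.norm.natAbs = p := by
        rw [← Int.natAbs_mul, ← Zsqrtd.norm_mul, ← hxy, hπ]; simp
      rcases (Nat.prime_mul_iff.1 (h ▸ hp)) with h | h
      · right; exact Zsqrtd.norm_eq_one_iff.1 h.2
      · left; exact Zsqrtd.norm_eq_one_iff.1 h.2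
  have hprime : Prime π := hirr.prime
  induction k with
  | zero => intro n w h; exact ⟨0, le_rfl, w, by simp, by simpa using h⟩
  | succ k ih =>
    intro n w h
    have hdvd : π ∣ w * star w := by
      rw [← Zsqrtd.norm_eq_mul_conj, h, pow_succ]
      have : π ∣ ((p : ℤ) : GaussianInt) := by
        rw [← hπ, Zsqrtd.norm_eq_mul_conj]; exact dvd_mul_right _ _
      push_cast at this ⊢
      exact (this.mul_left _).mul_right _
    rcases hprime.dvd_or_dvd hdvd with ⟨v, hv⟩ | hd
    · have hn : v.norm = (p : ℤ) ^ k * n := by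
        rw [hv, Zsqrtd.norm_mul, hπ] at h
        apply mul_left_cancel₀ hp0; rw [h]; ring
      obtain ⟨j, hj, w', rfl, hw'⟩ := ih n v hn
      refine ⟨j + 1, by omega, w', ?_, hw'⟩
      rw [hv, show k + 1 - (j + 1) = k - j by omega]; ring
    · obtain ⟨v, hv⟩ : star π ∣ w := by
        obtain ⟨v, hv⟩ := hd
        exact ⟨star v, by rw [← star_star w, hv, star_mul, mul_comm]⟩
      have hn : v.norm = (p : ℤ) ^ k * n := by
        rw [hv, Zsqrtd.norm_mul, Zsqrtd.norm_conj, hπ] at h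
        apply mul_left_cancel₀ hp0; rw [h]; ring
      obtain ⟨j, hj, w', rfl, hw'⟩ := ih n v hn
      refine ⟨j, by omega, w', ?_, hw'⟩
      rw [hv, show k + 1 - j = (k - j) + 1 by omega]; ring

/-- When `p` stays prime, the norm of `w` contains `p` to an even power `k`, and `p ^ (k / 2)` splits
off. For odd `k` there is no such `w`. -/
lemma inert_prime_factor {p : ℕ} (hp : p.Prime) (hπ : Prime (p : GaussianInt)) (k : ℕ) :
    ∀ (n : ℤ) (w : GaussianInt), ¬ (p : ℤ) ∣ n → w.norm = (p : ℤ) ^ k * n →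
      ∃ w' : GaussianInt, w = (p : GaussianInt) ^ (k / 2) * w' ∧ w'.norm = n := by
  have hp0 : (p : ℤ) ≠ 0 := by exact_mod_cast hp.ne_zero
  have key : ∀ w : GaussianInt, (p : ℤ) ∣ w.norm →
      ∃ v, w = (p : GaussianInt) * v ∧ w.norm = p * p * v.norm := by
    intro w h
    have hdvd : (p : GaussianInt) ∣ w * star w := by
      rw [← Zsqrtd.norm_eq_mul_conj]
      exact_mod_cast Int.cast_dvd_cast (α := GaussianInt) _ _ h
    have hw : (p : GaussianInt) ∣ w := by
      rcases hπ.dvd_or_dvd hdvd with h | ⟨v, hv⟩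
      · exact h
      · exact ⟨star v, by rw [← star_star w, hv, star_mul, mul_comm]; simp⟩
    obtain ⟨v, rfl⟩ := hw
    exact ⟨v, rfl, by rw [Zsqrtd.norm_mul, Zsqrtd.norm_natCast]⟩
  induction k using Nat.twoStepInduction with
  | zero => intro n w _ h; exact ⟨w, by simp, by simpa using h⟩
  | one =>
    intro n w hn h
    obtain ⟨v, -, hv⟩ := key w (h ▸ by simp)
    exact absurd ⟨v.norm, mul_left_cancel₀ hp0 (by rw [← mul_assoc, ← hv, h]; ring)⟩ hn
  | more k ih _ =>
    intro n w hn h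
    obtain ⟨v, rfl, hv⟩ := key w (h ▸ ⟨(p : ℤ) ^ (k + 1) * n, by ring⟩)
    obtain ⟨w', rfl, hw'⟩ := ih n v hn
      (mul_left_cancel₀ (mul_ne_zero hp0 hp0) (by rw [← hv, h]; ring))
    exact ⟨w', by rw [show (k + 2) / 2 = k / 2 + 1 by omega]; ring, hw'⟩

/-- Up to a factor of norm `n`, there are at most `k + 1` possibilities for a Gaussian integer of norm
`p ^ k * n` with `p ∤ n`. -/
lemma prime_pow_factor {p : ℕ} (hp : p.Prime) (k : ℕ) :
    ∃ g : ℕ → GaussianInt, ∀ (n : ℤ) (w : GaussianInt), ¬ (p : ℤ) ∣ n →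
      w.norm = (p : ℤ) ^ k * n → ∃ j ≤ k, ∃ w' : GaussianInt, w = g j * w' ∧ w'.norm = n := by
  have := Fact.mk hp
  by_cases hπ : Prime (p : GaussianInt)
  · refine ⟨fun _ => (p : GaussianInt) ^ (k / 2), fun n w hn h => ⟨0, Nat.zero_le _, ?_⟩⟩
    exact inert_prime_factor hp hπ k n w hn h
  · obtain ⟨a, b, hab⟩ := GaussianInt.sq_add_sq_of_nat_prime_of_not_irreducible p
      (fun h => hπ h.prime)
    refine ⟨fun j => (⟨a, b⟩ : GaussianInt) ^ j * star (⟨a, b⟩ : GaussianInt) ^ (k - j),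
      fun n w _ h => split_prime_factor hp ?_ k n w h⟩
    rw [Zsqrtd.norm_def]; push_cast [← hab]; ring

/-- The number of Gaussian integers of norm `n ≠ 0` is at most `4 d(n)`: by `prime_pow_factor` a prime
power `p ^ k` exactly dividing `n` contributes a factor `k + 1`, and there are four units. -/
lemma card_norm_eq_le (n : ℕ) (hn : n ≠ 0) :
    ∀ T : Finset GaussianInt, (∀ w ∈ T, w.norm = n) → T.card ≤ 4 * n.divisors.card := by
  induction n using Nat.recOnPrimePow with
  | zero => exact absurd rfl hn
  | one =>
    intro T hT
    have : T ⊆ {⟨1, 0⟩, ⟨-1, 0⟩, ⟨0, 1⟩, ⟨0, -1⟩} := by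
      rintro ⟨x, y⟩ hw
      have h := hT _ hw
      rw [Zsqrtd.norm_def] at h
      simp only [Nat.cast_one] at h
      have hx : x ≤ 1 := by nlinarith [mul_self_nonneg y]
      have hx' : -1 ≤ x := by nlinarith [mul_self_nonneg y]
      have hy : y ≤ 1 := by nlinarith [mul_self_nonneg x]
      have hy' : -1 ≤ y := by nlinarith [mul_self_nonneg x]
      interval_cases x <;> interval_cases y <;> simp_all
    exact (Finset.card_le_card this).trans (by simp)
  | prime_pow_mul a p k hp hpa hk ih =>
    intro T hT
    have ha : a ≠ 0 := by rintro rfl; simp at hpa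
    obtain ⟨g, hg⟩ := prime_pow_factor hp k
    have hg' : ∀ w : T, ∃ j ≤ k, ∃ w' : GaussianInt, w.1 = g j * w' ∧ w'.norm = a := fun w =>
      hg a w (by exact_mod_cast hpa) (by rw [hT _ w.2]; push_cast; ring)
    choose j hj v hv hn using hg'
    have hsub : T ⊆ (Finset.range (k + 1) ×ˢ Finset.univ.image v).image (fun q => g q.1 * q.2) := by
      intro w hw
      refine Finset.mem_image.2 ⟨(j ⟨w, hw⟩, v ⟨w, hw⟩), ?_, (hv ⟨w, hw⟩).symm⟩
      simp only [Finset.mem_product, Finset.mem_range]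
      exact ⟨Nat.lt_succ_of_le (hj _), Finset.mem_image_of_mem _ (Finset.mem_univ _)⟩
    have h1 := (Finset.card_le_card hsub).trans Finset.card_image_le
    rw [Finset.card_product, Finset.card_range] at h1
    have h2 := ih ha (Finset.univ.image v) (by
      intro w hw
      obtain ⟨x, -, rfl⟩ := Finset.mem_image.1 hw
      exact hn x)
    rw [Nat.Coprime.card_divisors_mul ((Nat.Prime.coprime_iff_not_dvd hp).2 hpa |>.pow_left k),
      Nat.divisors_prime_pow hp, Finset.card_map, Finset.card_range]
    calc _ ≤ _ := h1
      _ ≤ (k + 1) * (4 * a.divisors.card) := Nat.mul_le_mul_left _ h2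
      _ = _ := by ring

/-! ### The divisor bound -/

/-- The divisor bound `d(n) ≪_ε n^ε`. -/
lemma divisor_bound (ε : ℝ) (hε : 0 < ε) :
    ∃ C > (0 : ℝ), ∀ n : ℕ, n ≠ 0 → (n.divisors.card : ℝ) ≤ C * (n : ℝ) ^ ε := by
  -- `K` bounds `(k + 1) / 2 ^ (k ε)` for every `k`
  obtain ⟨K, hK1, hK⟩ : ∃ K : ℝ, 1 ≤ K ∧ ∀ k : ℕ, (k : ℝ) + 1 ≤ K * ((2 : ℝ) ^ ε) ^ k := by
    have h2 : 1 < (2 : ℝ) ^ ε := Real.one_lt_rpow (by norm_num) hε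
    set δ := (2 : ℝ) ^ ε - 1 with hδ
    have hδ0 : 0 < δ := by linarith
    refine ⟨1 + 1 / δ, by linarith [one_div_pos.2 hδ0], fun k => ?_⟩
    have hb : 1 + (k : ℝ) * δ ≤ ((2 : ℝ) ^ ε) ^ k := by
      have := one_add_mul_le_pow (a := δ) (by linarith) k
      rwa [hδ, add_sub_cancel] at this
    calc (k : ℝ) + 1 ≤ (1 + 1 / δ) * (1 + k * δ) := by
          have : (1 + 1 / δ) * (1 + k * δ) = k + 1 + k * δ + 1 / δ := by field_simp; ring
          rw [this]; have : 0 ≤ k * δ + 1 / δ := by positivity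
          linarith
      _ ≤ _ := mul_le_mul_of_nonneg_left hb (by positivity)
  obtain ⟨P, hP⟩ := exists_nat_ge ((2 : ℝ) ^ (1 / ε))
  -- primes `p ≥ P` contribute a factor `(k + 1) / p ^ (k ε) ≤ 1`, the others at most `K`
  have main : ∀ n : ℕ, n ≠ 0 → (n.divisors.card : ℝ) ≤
      K ^ (n.primeFactors.filter (· < P)).card * (n : ℝ) ^ ε := by
    intro n
    induction n using Nat.recOnPrimePow with
    | zero => intro h; exact absurd rfl h
    | one => intro _; simp
    | prime_pow_mul a p k hp hpa hk ih =>
      intro _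
      have ha : a ≠ 0 := by rintro rfl; simp at hpa
      have hcop : Nat.Coprime (p ^ k) a :=
        ((Nat.Prime.coprime_iff_not_dvd hp).2 hpa).pow_left k
      have hp2 : (2 : ℝ) ≤ p := by exact_mod_cast hp.two_le
      have hpk : ((p ^ k : ℕ) : ℝ) ^ ε = ((p : ℝ) ^ ε) ^ k := by
        push_cast
        rw [← Real.rpow_natCast, ← Real.rpow_mul (by positivity), mul_comm,
          Real.rpow_mul (by positivity), Real.rpow_natCast]
      rw [Nat.Coprime.card_divisors_mul hcop, Nat.divisors_prime_pow hp, Finset.card_map,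
        Finset.card_range, Nat.Coprime.primeFactors_mul hcop, Nat.primeFactors_prime_pow hk.ne' hp,
        Finset.filter_union, Finset.card_union_of_disjoint]
      swap
      · apply Finset.disjoint_filter_filter
        simp [hpa]
      rw [Nat.cast_mul, Nat.cast_mul, Real.mul_rpow (by positivity) (by positivity), hpk, pow_add]
      have h0 : ((k + 1 : ℕ) : ℝ) ≤
          K ^ (({p} : Finset ℕ).filter (· < P)).card * ((p : ℝ) ^ ε) ^ k := by
        push_cast
        by_cases hpP : p < P
        · rw [Finset.filter_singleton, if_pos hpP, Finset.card_singleton, pow_one]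
          refine (hK k).trans ?_
          gcongr
        · rw [Finset.filter_singleton, if_neg hpP, Finset.card_empty, pow_zero, one_mul]
          have h3 : (2 : ℝ) ≤ (p : ℝ) ^ ε := by
            have h4 : (2 : ℝ) ^ (1 / ε) ≤ p := hP.trans (by exact_mod_cast not_lt.1 hpP)
            calc (2 : ℝ) = ((2 : ℝ) ^ (1 / ε)) ^ ε := by
                  rw [← Real.rpow_mul (by norm_num), one_div_mul_cancel hε.ne', Real.rpow_one]
              _ ≤ _ := by gcongr
          calc (k : ℝ) + 1 ≤ 2 ^ k := by exact_mod_cast Nat.lt_two_pow_self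
            _ ≤ _ := by gcongr
      calc _ ≤ _ := mul_le_mul h0 (ih ha) (by positivity) (by positivity)
        _ = _ := by ring
  refine ⟨K ^ P, by positivity, fun n hn => (main n hn).trans ?_⟩
  gcongr
  calc _ ≤ (Finset.range P).card := Finset.card_le_card (fun x hx => by
          simpa using (Finset.mem_filter.1 hx).2)
    _ = P := Finset.card_range P

/-! ### Lattice points on short arcs -/

/-- Three distinct lattice points on the circle of squared radius `m`, with squared distances at most
`L`, force `4 m ≤ L ^ 3`. With `D` twice the signed area of the triangle, the circumradius formula
reads `4 m D² = |AB|² |AC|² |BC|²`, and `D` is a nonzero integer. -/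
lemma circle_three {A B C : ℤ × ℤ} {m L : ℤ}
    (hA : A.1 ^ 2 + A.2 ^ 2 = m) (hB : B.1 ^ 2 + B.2 ^ 2 = m) (hC : C.1 ^ 2 + C.2 ^ 2 = m)
    (hAB : A ≠ B) (hAC : A ≠ C) (hBC : B ≠ C)
    (dAB : (B.1 - A.1) ^ 2 + (B.2 - A.2) ^ 2 ≤ L) (dAC : (C.1 - A.1) ^ 2 + (C.2 - A.2) ^ 2 ≤ L)
    (dBC : (C.1 - B.1) ^ 2 + (C.2 - B.2) ^ 2 ≤ L) : 4 * m ≤ L ^ 3 := by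
  obtain ⟨a₁, a₂⟩ := A
  obtain ⟨b₁, b₂⟩ := B
  obtain ⟨c₁, c₂⟩ := C
  simp only at *
  have pos : ∀ x y : ℤ, (x ≠ 0 ∨ y ≠ 0) → 0 < x ^ 2 + y ^ 2 := by
    rintro x y (h | h) <;> positivity
  have pAB : 0 < (b₁ - a₁) ^ 2 + (b₂ - a₂) ^ 2 := pos _ _ (by grind)
  have pAC : 0 < (c₁ - a₁) ^ 2 + (c₂ - a₂) ^ 2 := pos _ _ (by grind)
  have pBC : 0 < (c₁ - b₁) ^ 2 + (c₂ - b₂) ^ 2 := pos _ _ (by grind)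
  set P := (b₁ - a₁) ^ 2 + (b₂ - a₂) ^ 2 with hP
  set Q := (c₁ - a₁) ^ 2 + (c₂ - a₂) ^ 2 with hQ
  set R := (c₁ - b₁) ^ 2 + (c₂ - b₂) ^ 2 with hR
  set D := (b₁ - a₁) * (c₂ - a₂) - (b₂ - a₂) * (c₁ - a₁) with hD
  -- Cramer's rule for the linear equations `2 A · (B - A) = -P`, `2 A · (C - A) = -Q`
  have eB : 2 * (a₁ * (b₁ - a₁) + a₂ * (b₂ - a₂)) = -P := by
    rw [hP]; linear_combination hB - hA
  have eC : 2 * (a₁ * (c₁ - a₁) + a₂ * (c₂ - a₂)) = -Q := by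
    rw [hQ]; linear_combination hC - hA
  have e1 : 2 * D * a₁ = -P * (c₂ - a₂) + Q * (b₂ - a₂) := by
    rw [hD]; linear_combination (c₂ - a₂) * eB - (b₂ - a₂) * eC
  have e2 : 2 * D * a₂ = P * (c₁ - a₁) - Q * (b₁ - a₁) := by
    rw [hD]; linear_combination -(c₁ - a₁) * eB + (b₁ - a₁) * eC
  have key : 4 * m * D ^ 2 = P * Q * R := by
    have : 4 * m * D ^ 2 = (2 * D * a₁) ^ 2 + (2 * D * a₂) ^ 2 := by rw [← hA]; ring
    rw [this, e1, e2, hP, hQ, hR]; ring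
  have hD0 : D ≠ 0 := by
    intro h
    rw [h] at key
    have := mul_pos (mul_pos pAB pAC) pBC
    simp at key; omega
  have hD1 : 1 ≤ D ^ 2 := by have : 0 < D ^ 2 := by positivity
                             omega
  have hm : 0 ≤ m := by rw [← hA]; positivity
  calc 4 * m ≤ 4 * m * D ^ 2 := le_mul_of_one_le_right (by omega) hD1
    _ = P * Q * R := key
    _ ≤ L * L * L := by
      have hL : 0 ≤ L := pAB.le.trans dAB
      gcongr
    _ = L ^ 3 := by ring

/-- A circle centred at the origin has `O(R ^ ε)` lattice points in a box of side `2 R`, uniformly in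
the radius of the circle and the centre of the box. -/
lemma circle_count (ε : ℝ) (hε : 0 < ε) :
    ∃ C > (0 : ℝ), ∀ (R : ℕ), 1 ≤ R → ∀ (e : ℤ × ℤ) (m : ℤ) (T : Finset (ℤ × ℤ)),
      (∀ w ∈ T, w.1 ^ 2 + w.2 ^ 2 = m) →
      (∀ w ∈ T, |w.1 - e.1| ≤ R ∧ |w.2 - e.2| ≤ R) → (T.card : ℝ) ≤ C * (R : ℝ) ^ ε := by
  obtain ⟨C, hC, hdiv⟩ := divisor_bound (ε / 6) (by positivity)
  -- three points in the box force `m ≤ 128 R⁶`, hence the exponent `ε / 6`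
  refine ⟨2 + 4 * C * 128 ^ (ε / 6), by positivity, fun R hR e m T hm hbox => ?_⟩
  have hR1 : (1 : ℝ) ≤ R := by exact_mod_cast hR
  have hRε : 1 ≤ (R : ℝ) ^ ε := Real.one_le_rpow hR1 hε.le
  have hpos : 0 < 4 * C * (128 : ℝ) ^ (ε / 6) := by positivity
  by_cases h2 : T.card ≤ 2
  · calc (T.card : ℝ) ≤ 2 := by exact_mod_cast h2
      _ ≤ 2 * (R : ℝ) ^ ε := by linarith
      _ ≤ _ := by gcongr; linarith
  obtain ⟨x, y, z, hx, hy, hz, hxy, hxz, hyz⟩ := Finset.two_lt_card_iff.1 (not_le.1 h2)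
  have dist : ∀ u ∈ T, ∀ v ∈ T, (v.1 - u.1) ^ 2 + (v.2 - u.2) ^ 2 ≤ 8 * (R : ℤ) ^ 2 := by
    intro u hu v hv
    have h1 := hbox u hu
    have h2 := hbox v hv
    simp only [abs_le] at h1 h2
    have h3 : (v.1 - u.1) ^ 2 ≤ (2 * (R : ℤ)) ^ 2 := sq_le_sq' (by omega) (by omega)
    have h4 : (v.2 - u.2) ^ 2 ≤ (2 * (R : ℤ)) ^ 2 := sq_le_sq' (by omega) (by omega)
    linarith
  have hmR := circle_three (hm x hx) (hm y hy) (hm z hz) hxy hxz hyz (dist x hx y hy)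
    (dist x hx z hz) (dist y hy z hz)
  have hm0 : 0 ≤ m := by rw [← hm x hx]; positivity
  lift m to ℕ using hm0
  have hmne : m ≠ 0 := by
    rintro rfl
    have hzero : ∀ w ∈ T, w = (0, 0) := by
      intro w hw
      have := hm w hw
      simp only [Nat.cast_zero] at this
      have a1 : w.1 = 0 := by nlinarith [sq_nonneg w.1, sq_nonneg w.2]
      have a2 : w.2 = 0 := by nlinarith [sq_nonneg w.1, sq_nonneg w.2]
      exact Prod.ext a1 a2
    exact hxy ((hzero x hx).trans (hzero y hy).symm)
  have hcard := card_norm_eq_le m hmne (T.image fun w => (⟨w.1, w.2⟩ : GaussianInt)) (by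
    intro w hw
    obtain ⟨v, hv, rfl⟩ := Finset.mem_image.1 hw
    rw [Zsqrtd.norm_def, ← hm v hv]; ring)
  rw [Finset.card_image_of_injective _ (by
    intro u v h
    exact Prod.ext (congrArg Zsqrtd.re h) (congrArg Zsqrtd.im h))] at hcard
  have hmR' : (m : ℝ) ≤ 128 * (R : ℝ) ^ 6 := by
    have : (4 * m : ℝ) ≤ (8 * (R : ℝ) ^ 2) ^ 3 := by exact_mod_cast hmR
    nlinarith
  have hpow : (m : ℝ) ^ (ε / 6) ≤ 128 ^ (ε / 6) * (R : ℝ) ^ ε := by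
    calc (m : ℝ) ^ (ε / 6) ≤ (128 * (R : ℝ) ^ 6) ^ (ε / 6) := by gcongr
      _ = _ := by
        rw [Real.mul_rpow (by norm_num) (by positivity), ← Real.rpow_natCast (R : ℝ) 6,
          ← Real.rpow_mul (by positivity)]
        congr 2; push_cast; ring
  calc (T.card : ℝ) ≤ 4 * m.divisors.card := by exact_mod_cast hcard
    _ ≤ 4 * (C * (m : ℝ) ^ (ε / 6)) := by gcongr; exact hdiv m hmne
    _ ≤ 4 * (C * (128 ^ (ε / 6) * (R : ℝ) ^ ε)) := by gcongr
    _ ≤ (2 + 4 * C * 128 ^ (ε / 6)) * (R : ℝ) ^ ε := by nlinarith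

/-! ### Lattice points on a line in a box -/

lemma card_progression_le {k : ℕ} (hk : 1 ≤ k) {M : ℕ} {e : ℤ} {s : Finset ℤ}
    (hs : ∀ x ∈ s, |x - e| ≤ M) (hd : ∀ x ∈ s, ∀ y ∈ s, (k : ℤ) ∣ x - y) :
    s.card ≤ 2 * M / k + 1 := by
  rcases s.eq_empty_or_nonempty with rfl | hne
  · simp
  set a := s.min' hne with ha
  have ham : a ∈ s := Finset.min'_mem _ _
  have hk0 : (0 : ℤ) < k := by exact_mod_cast hk
  calc s.card = (s.image fun x => (x - a) / k).card := by
        rw [Finset.card_image_of_injOn]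
        intro x hx y hy hxy
        have h1 := Int.ediv_mul_cancel (hd x hx a ham)
        have h2 := Int.ediv_mul_cancel (hd y hy a ham)
        simp only at hxy
        rw [hxy] at h1
        linarith
    _ ≤ (Finset.Icc (0 : ℤ) ((2 * M / k : ℕ) : ℤ)).card := by
        apply Finset.card_le_card
        intro t ht
        obtain ⟨x, hx, rfl⟩ := Finset.mem_image.1 ht
        have h0 : a ≤ x := Finset.min'_le _ _ hx
        have h1 := abs_le.1 (hs x hx)
        have h2 := abs_le.1 (hs a ham)
        refine Finset.mem_Icc.2 ⟨Int.ediv_nonneg (by omega) hk0.le, ?_⟩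
        rw [Int.natCast_div]
        exact Int.ediv_le_ediv hk0 (by push_cast; omega)
    _ = _ := by rw [Int.card_Icc, sub_zero, ← Nat.cast_succ, Int.toNat_natCast]

/-- The sup norm of the primitive vector `u / gcd(u)`. At `u = 0` it takes the value `0`. -/
def height (u : ℤ × ℤ) : ℕ := max u.1.natAbs u.2.natAbs / Int.gcd u.1 u.2

/-- The primitive vector `(p, q)` in the direction of `u`. -/
lemma height_spec {u : ℤ × ℤ} (hu : u ≠ 0) :
    ∃ p q : ℤ, u.1 = Int.gcd u.1 u.2 * p ∧ u.2 = Int.gcd u.1 u.2 * q ∧ IsCoprime p q ∧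
      max p.natAbs q.natAbs = height u ∧ 1 ≤ height u ∧ 0 < Int.gcd u.1 u.2 := by
  have hg : 0 < Int.gcd u.1 u.2 := by
    rw [Nat.pos_iff_ne_zero, Ne, Int.gcd_eq_zero_iff]
    rintro ⟨h1, h2⟩
    exact hu (Prod.ext h1 h2)
  obtain ⟨p, q, hpq, h1, h2⟩ := Int.exists_gcd_one hg
  have hh : max p.natAbs q.natAbs = height u := by
    have a1 : u.1.natAbs = p.natAbs * Int.gcd u.1 u.2 := by
      have := congrArg Int.natAbs h1
      rwa [Int.natAbs_mul, Int.natAbs_natCast] at this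
    have a2 : u.2.natAbs = q.natAbs * Int.gcd u.1 u.2 := by
      have := congrArg Int.natAbs h2
      rwa [Int.natAbs_mul, Int.natAbs_natCast] at this
    rw [height, a1, a2, ← max_mul_of_nonneg _ _ (Nat.zero_le _), Nat.mul_div_cancel _ hg]
  refine ⟨p, q, by rw [mul_comm]; exact h1, by rw [mul_comm]; exact h2,
    Int.isCoprime_iff_gcd_eq_one.2 hpq, hh, ?_, hg⟩
  rw [← hh]
  by_contra h
  have hp : p = 0 := by omega
  have hq : q = 0 := by omega
  subst hp hq
  simp at hpq

/-- `x` lies in the closed sup-norm ball of radius `M` around `e`. -/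
def InBox (e : ℤ × ℤ) (M : ℕ) (x : ℤ × ℤ) : Prop := |x.1 - e.1| ≤ M ∧ |x.2 - e.2| ≤ M

lemma card_le_of_inBox {e : ℤ × ℤ} {M : ℕ} {T : Finset (ℤ × ℤ)} (hT : ∀ y ∈ T, InBox e M y) :
    T.card ≤ (2 * M + 1) ^ 2 := by
  calc T.card ≤ (Finset.Icc (e.1 - M) (e.1 + M) ×ˢ Finset.Icc (e.2 - M) (e.2 + M)).card := by
        apply Finset.card_le_card
        intro y hy
        obtain ⟨h1, h2⟩ := hT y hy
        rw [abs_le] at h1 h2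
        simp only [Finset.mem_product, Finset.mem_Icc]
        omega
    _ = _ := by
        rw [Finset.card_product, Int.card_Icc, Int.card_Icc, sq]
        congr 1 <;> omega

/-- Two lattice points on a line orthogonal to `u` differ by a multiple of the primitive vector
`(-q, p)`. The coordinate of `y` matching the larger entry of that vector determines `y` and runs in
a progression of step `height u`. -/
lemma line_count {e u : ℤ × ℤ} (hu : u ≠ 0) {M : ℕ} {T : Finset (ℤ × ℤ)}
    (hT : ∀ y ∈ T, InBox e M y)
    (hline : ∀ y ∈ T, ∀ y' ∈ T, u.1 * (y.1 - y'.1) + u.2 * (y.2 - y'.2) = 0) :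
    T.card ≤ 2 * M / height u + 1 := by
  obtain ⟨p, q, h1, h2, hpq, hmax, hk, hg⟩ := height_spec hu
  have hline' : ∀ y ∈ T, ∀ y' ∈ T, p * (y.1 - y'.1) + q * (y.2 - y'.2) = 0 := by
    intro y hy y' hy'
    have h := hline y hy y' hy'
    have hg' : ((Int.gcd u.1 u.2 : ℕ) : ℤ) ≠ 0 := by exact_mod_cast hg.ne'
    exact mul_left_cancel₀ hg'
      (by linear_combination h - (y.1 - y'.1) * h1 - (y.2 - y'.2) * h2)
  rcases le_total p.natAbs q.natAbs with h | h
  · have hq : q.natAbs = height u := by omega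
    have hq0 : q ≠ 0 := by omega
    rw [← Finset.card_image_of_injOn (f := Prod.fst) (s := T)]
    · refine card_progression_le hk (e := e.1) ?_ ?_
      · intro x hx
        obtain ⟨y, hy, rfl⟩ := Finset.mem_image.1 hx
        exact (hT y hy).1
      · intro x hx x' hx'
        obtain ⟨y, hy, rfl⟩ := Finset.mem_image.1 hx
        obtain ⟨y', hy', rfl⟩ := Finset.mem_image.1 hx'
        rw [← hq, Int.natAbs_dvd]
        exact hpq.symm.dvd_of_dvd_mul_left
          ⟨-(y.2 - y'.2), by linear_combination hline' y hy y' hy'⟩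
    · intro y hy y' hy' hyy
      have h3 := hline' y hy y' hy'
      rw [hyy, sub_self, mul_zero, zero_add] at h3
      have := (mul_eq_zero.1 h3).resolve_left hq0
      exact Prod.ext hyy (by omega)
  · have hp : p.natAbs = height u := by omega
    have hp0 : p ≠ 0 := by omega
    rw [← Finset.card_image_of_injOn (f := Prod.snd) (s := T)]
    · refine card_progression_le hk (e := e.2) ?_ ?_
      · intro x hx
        obtain ⟨y, hy, rfl⟩ := Finset.mem_image.1 hx
        exact (hT y hy).2
      · intro x hx x' hx'
        obtain ⟨y, hy, rfl⟩ := Finset.mem_image.1 hx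
        obtain ⟨y', hy', rfl⟩ := Finset.mem_image.1 hx'
        rw [← hp, Int.natAbs_dvd]
        exact hpq.dvd_of_dvd_mul_left
          ⟨-(y.1 - y'.1), by linear_combination hline' y hy y' hy'⟩
    · intro y hy y' hy' hyy
      have h3 := hline' y hy y' hy'
      rw [hyy, sub_self, mul_zero, add_zero] at h3
      have := (mul_eq_zero.1 h3).resolve_left hp0
      exact Prod.ext (by omega) hyy

/-! ### Summing the reciprocal heights over a box -/

lemma ray_count {e : ℤ × ℤ} {p q : ℤ} {k M : ℕ} (hk : 1 ≤ k)
    (hmax : max p.natAbs q.natAbs = k) {U : Finset (ℤ × ℤ)} (hU : ∀ u ∈ U, InBox e M u)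
    (hray : ∀ u ∈ U, ∃ g : ℤ, u.1 = g * p ∧ u.2 = g * q) :
    U.card ≤ 2 * M / k + 1 := by
  rcases le_total p.natAbs q.natAbs with h | h
  · have hq : q.natAbs = k := by omega
    have hq0 : q ≠ 0 := by omega
    rw [← Finset.card_image_of_injOn (f := Prod.snd) (s := U)]
    · refine card_progression_le hk (e := e.2) ?_ ?_
      · intro x hx
        obtain ⟨y, hy, rfl⟩ := Finset.mem_image.1 hx
        exact (hU y hy).2
      · intro x hx x' hx'
        obtain ⟨y, hy, rfl⟩ := Finset.mem_image.1 hx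
        obtain ⟨y', hy', rfl⟩ := Finset.mem_image.1 hx'
        obtain ⟨g, -, hg⟩ := hray y hy
        obtain ⟨g', -, hg'⟩ := hray y' hy'
        rw [← hq, Int.natAbs_dvd]
        exact ⟨g - g', by rw [hg, hg']; ring⟩
    · intro y hy y' hy' hyy
      obtain ⟨g, h1, hg⟩ := hray y hy
      obtain ⟨g', h1', hg'⟩ := hray y' hy'
      have : g = g' := mul_right_cancel₀ hq0 (by rw [← hg, ← hg', hyy])
      exact Prod.ext (by rw [h1, h1', this]) hyy
  · have hp : p.natAbs = k := by omega
    have hp0 : p ≠ 0 := by omega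
    rw [← Finset.card_image_of_injOn (f := Prod.fst) (s := U)]
    · refine card_progression_le hk (e := e.1) ?_ ?_
      · intro x hx
        obtain ⟨y, hy, rfl⟩ := Finset.mem_image.1 hx
        exact (hU y hy).1
      · intro x hx x' hx'
        obtain ⟨y, hy, rfl⟩ := Finset.mem_image.1 hx
        obtain ⟨y', hy', rfl⟩ := Finset.mem_image.1 hx'
        obtain ⟨g, hg, -⟩ := hray y hy
        obtain ⟨g', hg', -⟩ := hray y' hy'
        rw [← hp, Int.natAbs_dvd]
        exact ⟨g - g', by rw [hg, hg']; ring⟩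
    · intro y hy y' hy' hyy
      obtain ⟨g, hg, h1⟩ := hray y hy
      obtain ⟨g', hg', h1'⟩ := hray y' hy'
      have : g = g' := mul_right_cancel₀ hp0 (by rw [← hg, ← hg', hyy])
      exact Prod.ext hyy (by rw [h1, h1', this])

/-- The vectors of height `k` in a box: `4 * (2 * k + 1)` bounds the number of directions and
`2 * M / k + 1` the number of vectors in each direction. -/
lemma card_height_eq_le {e : ℤ × ℤ} {k M : ℕ} {U : Finset (ℤ × ℤ)} (hk : 1 ≤ k)
    (hU : ∀ u ∈ U, InBox e M u) (h0 : ∀ u ∈ U, u ≠ 0) (hh : ∀ u ∈ U, height u = k) :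
    U.card ≤ (2 * M / k + 1) * (4 * (2 * k + 1)) := by
  set I := Finset.Icc (-(k : ℤ)) k with hI
  set E : Finset ℤ := {(k : ℤ), -(k : ℤ)} with hE
  have hIc : I.card = 2 * k + 1 := by rw [hI, Int.card_Icc]; omega
  have hEc : E.card ≤ 2 := Finset.card_le_two
  -- the sup-norm sphere of radius `k`
  set S := E ×ˢ I ∪ I ×ˢ E with hS
  have hSc : S.card ≤ 4 * (2 * k + 1) := by
    refine (Finset.card_union_le _ _).trans ?_
    rw [Finset.card_product, Finset.card_product, hIc]
    nlinarith
  let f : ℤ × ℤ → ℤ × ℤ := fun u => (u.1 / Int.gcd u.1 u.2, u.2 / Int.gcd u.1 u.2)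
  have hf : ∀ u ∈ U, u.1 = Int.gcd u.1 u.2 * (f u).1 ∧ u.2 = Int.gcd u.1 u.2 * (f u).2 ∧
      max (f u).1.natAbs (f u).2.natAbs = k := by
    intro u hu
    obtain ⟨p, q, h1, h2, -, hmax, -, hg⟩ := height_spec (h0 u hu)
    have hg' : ((Int.gcd u.1 u.2 : ℕ) : ℤ) ≠ 0 := by exact_mod_cast hg.ne'
    have e1 : (f u).1 = p := Int.ediv_eq_of_eq_mul_right hg' h1
    have e2 : (f u).2 = q := Int.ediv_eq_of_eq_mul_right hg' h2
    rw [e1, e2]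
    exact ⟨h1, h2, hmax.trans (hh u hu)⟩
  have hmaps : ∀ u ∈ U, f u ∈ S := by
    intro u hu
    obtain ⟨-, -, h⟩ := hf u hu
    simp only [hS, hE, hI, Finset.mem_union, Finset.mem_product, Finset.mem_insert,
      Finset.mem_singleton, Finset.mem_Icc]
    omega
  refine (Finset.card_le_mul_card_image_of_maps_to hmaps (2 * M / k + 1) ?_).trans
    (Nat.mul_le_mul_left _ hSc)
  intro v _
  rcases (U.filter fun u => f u = v).eq_empty_or_nonempty with h | ⟨w, hw⟩
  · rw [h]; simp
  have hw' := Finset.mem_filter.1 hw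
  refine ray_count (e := e) (p := v.1) (q := v.2) hk ?_ ?_ ?_
  · rw [← hw'.2]; exact (hf w hw'.1).2.2
  · intro u hu; exact hU u (Finset.mem_filter.1 hu).1
  · intro u hu
    obtain ⟨huU, huv⟩ := Finset.mem_filter.1 hu
    rw [← huv]
    exact ⟨_, (hf u huU).1, (hf u huU).2.1⟩

/-- The heights `k ≤ M` contribute a harmonic sum; the heights above `M` contribute at most the number
of points of the box divided by `M`. The centre `e` is arbitrary. -/
lemma sum_inv_height_le {e : ℤ × ℤ} {M : ℕ} (hM : 1 ≤ M) {U : Finset (ℤ × ℤ)}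
    (hU : ∀ u ∈ U, InBox e M u) (h0 : ∀ u ∈ U, u ≠ 0) :
    ∑ u ∈ U, (1 : ℝ) / height u ≤ M * (45 + 36 * Real.log M) := by
  have hM1 : (1 : ℝ) ≤ M := by exact_mod_cast hM
  rw [← Finset.sum_filter_add_sum_filter_not U (fun u => height u ≤ M)]
  have hlow : ∑ u ∈ U.filter (fun u => height u ≤ M), (1 : ℝ) / height u
      ≤ 36 * M * (1 + Real.log M) := by
    rw [← Finset.sum_fiberwise_of_maps_to (s := U.filter (fun u => height u ≤ M))
      (t := Finset.Icc 1 M) (g := height) (by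
        intro u hu
        obtain ⟨hu, h⟩ := Finset.mem_filter.1 hu
        obtain ⟨_, _, _, _, _, _, h1, _⟩ := height_spec (h0 u hu)
        exact Finset.mem_Icc.2 ⟨h1, h⟩)]
    calc _ ≤ ∑ k ∈ Finset.Icc 1 M, 36 * (M : ℝ) * (k : ℝ)⁻¹ := by
          refine Finset.sum_le_sum fun k hk => ?_
          obtain ⟨hk1, hkM⟩ := Finset.mem_Icc.1 hk
          have hk1' : (1 : ℝ) ≤ k := by exact_mod_cast hk1
          have hkM' : (k : ℝ) ≤ M := by exact_mod_cast hkM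
          set F := (U.filter (fun u => height u ≤ M)).filter (fun u => height u = k) with hF
          have hc : F.card ≤ (2 * M / k + 1) * (4 * (2 * k + 1)) := by
            refine card_height_eq_le (e := e) hk1 ?_ ?_ ?_ <;> intro u hu <;>
              simp only [hF, Finset.mem_filter] at hu
            · exact hU u hu.1.1
            · exact h0 u hu.1.1
            · exact hu.2
          have hc' : (F.card : ℝ) ≤ 36 * M := by
            have hdiv : ((2 * M / k : ℕ) : ℝ) ≤ 2 * M / k := by
              have := @Nat.cast_div_le ℝ _ _ _ (2 * M) k
              push_cast at this; exact this
            calc (F.card : ℝ) ≤ (((2 * M / k : ℕ) : ℝ) + 1) * (4 * (2 * k + 1)) := by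
                  exact_mod_cast hc
              _ ≤ (2 * M / k + M / k) * (4 * (2 * k + k)) := by
                  gcongr
                  rwa [le_div_iff₀ (by linarith), one_mul]
              _ = 36 * M := by field_simp; ring
          calc ∑ u ∈ F, (1 : ℝ) / height u = ∑ u ∈ F, (k : ℝ)⁻¹ := by
                refine Finset.sum_congr rfl fun u hu => ?_
                rw [(Finset.mem_filter.1 hu).2, one_div]
            _ = F.card * (k : ℝ)⁻¹ := by rw [Finset.sum_const, nsmul_eq_mul]
            _ ≤ _ := by gcongr
      _ = 36 * M * ((harmonic M : ℚ) : ℝ) := by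
          rw [← Finset.mul_sum, harmonic_eq_sum_Icc]; push_cast; rfl
      _ ≤ _ := by gcongr; exact harmonic_le_one_add_log M
  have hhigh : ∑ u ∈ U.filter (fun u => ¬ height u ≤ M), (1 : ℝ) / height u ≤ 9 * M := by
    calc _ ≤ ∑ u ∈ U.filter (fun u => ¬ height u ≤ M), (1 : ℝ) / M := by
          refine Finset.sum_le_sum fun u hu => ?_
          have : (M : ℝ) ≤ height u := by
            exact_mod_cast (not_le.1 (Finset.mem_filter.1 hu).2).le
          gcongr
      _ = (U.filter (fun u => ¬ height u ≤ M)).card * (1 / M : ℝ) := by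
          rw [Finset.sum_const, nsmul_eq_mul]
      _ ≤ (2 * M + M) ^ 2 * (1 / M : ℝ) := by
          gcongr
          calc ((U.filter (fun u => ¬ height u ≤ M)).card : ℝ) ≤ ((2 * M + 1) ^ 2 : ℕ) := by
                exact_mod_cast (Finset.card_filter_le _ _).trans (card_le_of_inBox hU)
            _ ≤ _ := by push_cast; gcongr
      _ = 9 * M := by field_simp; ring
  linarith

/-! ### Fibering over `z` -/

/-- The set of `y` with `(y, z) ∈ P`. -/
def fib (P : Finset ((ℤ × ℤ) × (ℤ × ℤ))) (z : ℤ × ℤ) : Finset (ℤ × ℤ) :=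
  (P.filter fun p => p.2 = z).image Prod.fst

lemma mem_fib {P : Finset ((ℤ × ℤ) × (ℤ × ℤ))} {y z : ℤ × ℤ} : y ∈ fib P z ↔ (y, z) ∈ P := by
  simp [fib]

lemma card_eq_sum_fib (P : Finset ((ℤ × ℤ) × (ℤ × ℤ))) :
    P.card = ∑ z ∈ P.image Prod.snd, (fib P z).card := by
  rw [Finset.card_eq_sum_card_image Prod.snd P]
  refine Finset.sum_congr rfl fun z _ => ?_
  rw [fib, Finset.card_image_of_injOn]
  intro p hp q hq h
  exact Prod.ext h ((Finset.mem_filter.1 hp).2.trans (Finset.mem_filter.1 hq).2.symm)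

/-- Pairs `(y, z)` in boxes such that, for each `z`, all `y` lie on one line orthogonal to `u z ≠ 0`. -/
lemma count_lines {P : Finset ((ℤ × ℤ) × (ℤ × ℤ))} {b c e : ℤ × ℤ} {M₂ M₃ : ℕ} (hM : 1 ≤ M₃)
    (u : ℤ × ℤ → ℤ × ℤ) (hu : Function.Injective u)
    (hy : ∀ p ∈ P, InBox b M₂ p.1) (hz : ∀ p ∈ P, InBox c M₃ p.2)
    (hbox : ∀ p ∈ P, InBox e M₃ (u p.2)) (h0 : ∀ p ∈ P, u p.2 ≠ 0)
    (hline : ∀ y y' z, (y, z) ∈ P → (y', z) ∈ P →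
      (u z).1 * (y.1 - y'.1) + (u z).2 * (y.2 - y'.2) = 0) :
    (P.card : ℝ) ≤ (2 * M₃ + 1) ^ 2 + 2 * M₂ * (M₃ * (45 + 36 * Real.log M₃)) := by
  have hex : ∀ z ∈ P.image Prod.snd, ∃ y, (y, z) ∈ P := by
    intro z hz
    obtain ⟨p, hp, rfl⟩ := Finset.mem_image.1 hz
    exact ⟨p.1, hp⟩
  have hfib : ∀ z ∈ P.image Prod.snd,
      ((fib P z).card : ℝ) ≤ 2 * M₂ * (1 / height (u z)) + 1 := by
    intro z hz
    obtain ⟨y₀, hy₀⟩ := hex z hz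
    have h := line_count (e := b) (h0 _ hy₀) (M := M₂) (T := fib P z)
      (fun y h => hy _ (mem_fib.1 h))
      (fun y h y' h' => hline y y' z (mem_fib.1 h) (mem_fib.1 h'))
    have hdiv := @Nat.cast_div_le ℝ _ _ _ (2 * M₂) (height (u z))
    push_cast at hdiv
    calc ((fib P z).card : ℝ) ≤ ((2 * M₂ / height (u z) : ℕ) : ℝ) + 1 := by exact_mod_cast h
      _ ≤ 2 * M₂ / height (u z) + 1 := by linarith
      _ = _ := by ring
  have hcard : ((P.image Prod.snd).card : ℝ) ≤ (2 * M₃ + 1) ^ 2 := by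
    have := card_le_of_inBox (e := c) (M := M₃) (T := P.image Prod.snd) (by
      intro z h
      obtain ⟨y, h⟩ := hex z h
      exact hz _ h)
    exact_mod_cast this
  have hsum : ∑ z ∈ P.image Prod.snd, (1 : ℝ) / height (u z) ≤ M₃ * (45 + 36 * Real.log M₃) := by
    rw [← Finset.sum_image (f := fun v => (1 : ℝ) / height v) (g := u) hu.injOn]
    refine sum_inv_height_le (e := e) hM ?_ ?_ <;> intro v hv <;>
      obtain ⟨z, hz, rfl⟩ := Finset.mem_image.1 hv <;> obtain ⟨y, h⟩ := hex z hz
    · exact hbox _ h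
    · exact h0 _ h
  rw [card_eq_sum_fib P, Nat.cast_sum]
  calc _ ≤ ∑ z ∈ P.image Prod.snd, (2 * M₂ * (1 / height (u z)) + 1 : ℝ) :=
        Finset.sum_le_sum hfib
    _ = 2 * M₂ * ∑ z ∈ P.image Prod.snd, (1 : ℝ) / height (u z) + (P.image Prod.snd).card := by
        rw [Finset.sum_add_distrib, ← Finset.mul_sum, Finset.sum_const, nsmul_eq_mul, mul_one]
    _ ≤ 2 * M₂ * (M₃ * (45 + 36 * Real.log M₃)) + (2 * M₃ + 1) ^ 2 := by gcongr
    _ = _ := add_comm _ _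

lemma count_circles {P : Finset ((ℤ × ℤ) × (ℤ × ℤ))} {c : ℤ × ℤ} {M₃ : ℕ} {K : ℝ} (hK : 0 ≤ K)
    (hz : ∀ p ∈ P, InBox c M₃ p.2) (hfib : ∀ z, ((fib P z).card : ℝ) ≤ K) :
    (P.card : ℝ) ≤ (2 * M₃ + 1) ^ 2 * K := by
  have hcard : ((P.image Prod.snd).card : ℝ) ≤ (2 * M₃ + 1) ^ 2 := by
    have := card_le_of_inBox (e := c) (M := M₃) (T := P.image Prod.snd) (by
      intro z h
      obtain ⟨p, hp, rfl⟩ := Finset.mem_image.1 h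
      exact hz _ hp)
    exact_mod_cast this
  rw [card_eq_sum_fib P, Nat.cast_sum]
  calc _ ≤ ∑ z ∈ P.image Prod.snd, K := Finset.sum_le_sum fun z _ => hfib z
    _ = (P.image Prod.snd).card * K := by rw [Finset.sum_const, nsmul_eq_mul]
    _ ≤ _ := by gcongr

/-! ### The counting estimate -/

lemma inBox_of_enormZ_le {x e : ℤ × ℤ} {N : ℝ} (h : enormZ (x - e) ≤ N) : InBox e ⌊N⌋₊ x := by
  have key : ∀ t : ℤ, (t : ℝ) ^ 2 ≤ ((x - e).1 : ℝ) ^ 2 + ((x - e).2 : ℝ) ^ 2 →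
      |t| ≤ (⌊N⌋₊ : ℤ) := by
    intro t ht
    have h1 : (t.natAbs : ℝ) ≤ N := by
      rw [Nat.cast_natAbs, Int.cast_abs, ← Real.sqrt_sq_eq_abs]
      exact (Real.sqrt_le_sqrt ht).trans h
    rw [Int.abs_eq_natAbs]
    exact_mod_cast Nat.le_floor h1
  exact ⟨key (x.1 - e.1) (le_add_of_nonneg_right (sq_nonneg _)),
    key (x.2 - e.2) (le_add_of_nonneg_left (sq_nonneg _))⟩

/-- The basic lattice counting estimate (Lemma 4.1, after Deng–Nahmod–Yue): the number of
non-paired solutions `(x,y,z)` of `ι₁x+ι₂y+ι₃z = d`, `ι₁⟨x⟩²+ι₂⟨y⟩²+ι₃⟨z⟩² = α` in balls of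
radii `N₁ ≥ N₂ ≥ N₃ ≥ 1` is `≲_θ N₂^{1+θ} N₃`, uniformly in the centers and in `d, α`. -/
theorem counting_estimate (θ : ℝ) (hθ : 0 < θ) :
    ∃ C > (0 : ℝ), ∀ N₁ N₂ N₃ : ℝ, 1 ≤ N₃ → N₃ ≤ N₂ → N₂ ≤ N₁ →
      ∀ ι₁ ι₂ ι₃ : ℤ, (ι₁ = 1 ∨ ι₁ = -1) → (ι₂ = 1 ∨ ι₂ = -1) → (ι₃ = 1 ∨ ι₃ = -1) →
      ∀ a b c d : ℤ × ℤ, ∀ α : ℤ,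
        ((Set.ncard {p : (ℤ × ℤ) × (ℤ × ℤ) × (ℤ × ℤ) |
            ι₁ • p.1 + ι₂ • p.2.1 + ι₃ • p.2.2 = d ∧
            ι₁ * jbSqInt p.1 + ι₂ * jbSqInt p.2.1 + ι₃ * jbSqInt p.2.2 = α ∧
            enormZ (p.1 - a) ≤ N₁ ∧ enormZ (p.2.1 - b) ≤ N₂ ∧ enormZ (p.2.2 - c) ≤ N₃ ∧
            (ι₁ = -ι₂ → p.1 ≠ p.2.1) ∧ (ι₂ = -ι₃ → p.2.1 ≠ p.2.2) ∧
            (ι₁ = -ι₃ → p.1 ≠ p.2.2)} : ℕ) : ℝ)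
          ≤ C * N₂ ^ (1 + θ) * N₃ := by
  obtain ⟨C, hC, hcirc⟩ := circle_count θ hθ
  refine ⟨99 + 72 / θ + 9 * (C * 2 ^ θ), by positivity, ?_⟩
  intro N₁ N₂ N₃ h3 h32 _ ι₁ ι₂ ι₃ hι₁ hι₂ hι₃ a b c d α
  set S := {p : (ℤ × ℤ) × (ℤ × ℤ) × (ℤ × ℤ) | _} with hS
  have s1 : ι₁ * ι₁ = 1 := by rcases hι₁ with rfl | rfl <;> rfl
  have s3 : ι₃ * ι₃ = 1 := by rcases hι₃ with rfl | rfl <;> rfl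
  set M₂ := ⌊N₂⌋₊ with hM₂
  set M₃ := ⌊N₃⌋₊ with hM₃
  have hM₃1 : 1 ≤ M₃ := Nat.le_floor (by exact_mod_cast h3)
  have hM₂1 : 1 ≤ M₂ := Nat.le_floor (by push_cast; linarith)
  have hM₃N : (M₃ : ℝ) ≤ N₃ := Nat.floor_le (by linarith)
  have hM₂N : (M₂ : ℝ) ≤ N₂ := Nat.floor_le (by linarith)
  have hM₃1' : (1 : ℝ) ≤ M₃ := by exact_mod_cast hM₃1
  -- `x` is determined by `(y, z)`
  have hinj : Set.InjOn Prod.snd S := by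
    rintro ⟨x, y, z⟩ hp ⟨x', y', z'⟩ hp' h
    obtain ⟨rfl, rfl⟩ := Prod.mk.inj h
    have h1 : ι₁ • x + ι₂ • y + ι₃ • z = ι₁ • x' + ι₂ • y + ι₃ • z := hp.1.trans hp'.1.symm
    have h2 : ι₁ • x = ι₁ • x' := by simpa using h1
    have h3 : x = x' := by
      rw [← one_smul ℤ x, ← one_smul ℤ x', ← s1, mul_smul, mul_smul, h2]
    rw [h3]
  have hfin : (Prod.snd '' S).Finite := by
    refine ((Finset.Icc (b.1 - M₂) (b.1 + M₂) ×ˢ Finset.Icc (b.2 - M₂) (b.2 + M₂)) ×ˢ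
      (Finset.Icc (c.1 - M₃) (c.1 + M₃) ×ˢ Finset.Icc (c.2 - M₃) (c.2 + M₃))).finite_toSet.subset ?_
    rintro _ ⟨p, hp, rfl⟩
    obtain ⟨-, -, -, h2, h3, -⟩ := hp
    obtain ⟨h4, h5⟩ := inBox_of_enormZ_le h2
    obtain ⟨h6, h7⟩ := inBox_of_enormZ_le h3
    rw [abs_le] at h4 h5 h6 h7
    simp only [Finset.coe_product, Set.mem_prod, Finset.coe_Icc, Set.mem_Icc]
    omega
  rw [← hinj.ncard_image, Set.ncard_eq_toFinset_card _ hfin]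
  set P := hfin.toFinset with hP
  have hmem : ∀ y z, (y, z) ∈ P → ∃ x, (x, y, z) ∈ S := by
    intro y z h
    obtain ⟨⟨x, q⟩, hp, rfl⟩ := (Set.Finite.mem_toFinset hfin).1 h
    exact ⟨x, hp⟩
  have hy : ∀ p ∈ P, InBox b M₂ p.1 := by
    rintro ⟨y, z⟩ h
    obtain ⟨x, hx⟩ := hmem y z h
    exact inBox_of_enormZ_le hx.2.2.2.1
  have hz : ∀ p ∈ P, InBox c M₃ p.2 := by
    rintro ⟨y, z⟩ h
    obtain ⟨x, hx⟩ := hmem y z h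
    exact inBox_of_enormZ_le hx.2.2.2.2.1
  have heq : ∀ x y z, (x, y, z) ∈ S →
      ι₁ * x.1 + ι₂ * y.1 + ι₃ * z.1 = d.1 ∧ ι₁ * x.2 + ι₂ * y.2 + ι₃ * z.2 = d.2 ∧
      ι₁ * (1 + x.1 ^ 2 + x.2 ^ 2) + ι₂ * (1 + y.1 ^ 2 + y.2 ^ 2) + ι₃ * jbSqInt z = α := by
    intro x y z h
    refine ⟨?_, ?_, h.2.1⟩ <;> rw [← h.1] <;> simp
  -- `x - y` if `ι₁ = -ι₂`, and `x + y` if `ι₁ = ι₂`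
  let u : ℤ × ℤ → ℤ × ℤ := fun z => (ι₁ * d.1 - ι₁ * ι₃ * z.1, ι₁ * d.2 - ι₁ * ι₃ * z.2)
  have hpow : N₂ ^ (1 + θ) = N₂ * N₂ ^ θ := by
    rw [Real.rpow_add (by linarith), Real.rpow_one]
  have hNθ : 1 ≤ N₂ ^ θ := Real.one_le_rpow (by linarith) hθ.le
  have hN₂ : 0 < N₂ := by linarith
  have hN₃ : 0 < N₃ := by linarith
  have h9 : (2 * M₃ + 1 : ℝ) ^ 2 ≤ 9 * (N₂ * N₃) := by
    calc (2 * M₃ + 1 : ℝ) ^ 2 ≤ (3 * N₃) ^ 2 := by gcongr; linarith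
      _ = 9 * (N₃ * N₃) := by ring
      _ ≤ _ := by gcongr
  have hcases : ι₁ = -ι₂ ∨ ι₁ = ι₂ := by omega
  rcases hcases with h12 | h12
  -- `y` lies on a line orthogonal to `u z`
  · have hι₂' : ι₂ = -ι₁ := by omega
    have hux : ∀ x y z, (x, y, z) ∈ S → (u z).1 = x.1 - y.1 ∧ (u z).2 = x.2 - y.2 := by
      intro x y z h
      obtain ⟨e1, e2, -⟩ := heq x y z h
      rw [hι₂'] at e1 e2
      constructor
      · change ι₁ * d.1 - ι₁ * ι₃ * z.1 = _
        linear_combination -ι₁ * e1 + (x.1 - y.1) * s1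
      · change ι₁ * d.2 - ι₁ * ι₃ * z.2 = _
        linear_combination -ι₁ * e2 + (x.2 - y.2) * s1
    have habs : |ι₁ * ι₃| = 1 := by
      rcases hι₁ with rfl | rfl <;> rcases hι₃ with rfl | rfl <;> rfl
    have hs : (ι₁ * ι₃) * (ι₁ * ι₃) = 1 := by linear_combination ι₃ * ι₃ * s1 + s3
    have hbound := count_lines (P := P) (b := b) (c := c) (e := u c) (M₂ := M₂) hM₃1 u ?_ hy hz
      ?_ ?_ ?_
    · have hlog : Real.log M₃ ≤ N₂ ^ θ / θ :=
        (Real.log_le_log (by linarith) (by linarith)).trans (Real.log_le_rpow_div hN₂.le hθ)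
      have hlog0 : 0 ≤ Real.log M₃ := Real.log_nonneg hM₃1'
      calc (P.card : ℝ) ≤ _ := hbound
        _ ≤ 9 * (N₂ * N₃) + 2 * N₂ * (N₃ * (45 + 36 * (N₂ ^ θ / θ))) := by gcongr
        _ = N₂ * N₃ * 99 + 72 / θ * (N₂ * N₂ ^ θ) * N₃ := by ring
        _ ≤ N₂ * N₃ * (99 * N₂ ^ θ) + 72 / θ * (N₂ * N₂ ^ θ) * N₃
            + 9 * (C * 2 ^ θ) * (N₂ * N₂ ^ θ) * N₃ := by
          have : 0 ≤ 9 * (C * 2 ^ θ) * (N₂ * N₂ ^ θ) * N₃ := by positivity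
          have : N₂ * N₃ * 99 ≤ N₂ * N₃ * (99 * N₂ ^ θ) := by gcongr; linarith
          linarith
        _ = _ := by rw [hpow]; ring
    · intro z z' h
      have e1 : ι₁ * d.1 - ι₁ * ι₃ * z.1 = ι₁ * d.1 - ι₁ * ι₃ * z'.1 := congrArg Prod.fst h
      have e2 : ι₁ * d.2 - ι₁ * ι₃ * z.2 = ι₁ * d.2 - ι₁ * ι₃ * z'.2 := congrArg Prod.snd h
      exact Prod.ext (by linear_combination -(ι₁ * ι₃) * e1 - (z.1 - z'.1) * hs)
        (by linear_combination -(ι₁ * ι₃) * e2 - (z.2 - z'.2) * hs)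
    · intro p hp
      obtain ⟨h1, h2⟩ := hz p hp
      have key : ∀ s t r : ℤ, |s - t| ≤ M₃ →
          |(r - ι₁ * ι₃ * s) - (r - ι₁ * ι₃ * t)| ≤ M₃ := by
        intro s t r h
        rw [show (r - ι₁ * ι₃ * s) - (r - ι₁ * ι₃ * t) = -(ι₁ * ι₃ * (s - t)) by ring, abs_neg,
          abs_mul, habs, one_mul]
        exact h
      exact ⟨key _ _ _ h1, key _ _ _ h2⟩
    · rintro ⟨y, z⟩ hp h
      obtain ⟨x, hx⟩ := hmem y z hp
      obtain ⟨e1, e2⟩ := hux x y z hx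
      simp only at h
      rw [h] at e1 e2
      exact hx.2.2.2.2.2.1 h12 (Prod.ext (sub_eq_zero.1 e1.symm) (sub_eq_zero.1 e2.symm))
    · intro y y' z hp hp'
      obtain ⟨x, hx⟩ := hmem y z hp
      obtain ⟨x', hx'⟩ := hmem y' z hp'
      obtain ⟨e1, e2⟩ := hux x y z hx
      obtain ⟨e1', e2'⟩ := hux x' y' z hx'
      obtain ⟨-, -, e3⟩ := heq x y z hx
      obtain ⟨-, -, e3'⟩ := heq x' y' z hx'
      rw [hι₂'] at e3 e3'
      have hx1 : x.1 = y.1 + (u z).1 := by linarith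
      have hx2 : x.2 = y.2 + (u z).2 := by linarith
      have hx1' : x'.1 = y'.1 + (u z).1 := by linarith
      have hx2' : x'.2 = y'.2 + (u z).2 := by linarith
      rw [hx1, hx2] at e3
      rw [hx1', hx2'] at e3'
      have h2 : 2 * ((u z).1 * (y.1 - y'.1) + (u z).2 * (y.2 - y'.2)) = 0 := by
        linear_combination ι₁ * (e3 - e3') -
          2 * ((u z).1 * (y.1 - y'.1) + (u z).2 * (y.2 - y'.2)) * s1
      omega
  -- `u z - 2 y = x - y` lies on a circle centred at the origin
  · have hux : ∀ x y z, (x, y, z) ∈ S → (u z).1 = x.1 + y.1 ∧ (u z).2 = x.2 + y.2 := by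
      intro x y z h
      obtain ⟨e1, e2, -⟩ := heq x y z h
      rw [← h12] at e1 e2
      constructor
      · change ι₁ * d.1 - ι₁ * ι₃ * z.1 = _
        linear_combination -ι₁ * e1 + (x.1 + y.1) * s1
      · change ι₁ * d.2 - ι₁ * ι₃ * z.2 = _
        linear_combination -ι₁ * e2 + (x.2 + y.2) * s1
    have hbound := count_circles (P := P) (c := c) (M₃ := M₃) (K := C * (2 * M₂ : ℝ) ^ θ)
      (by positivity) hz ?_
    · calc (P.card : ℝ) ≤ _ := hbound
        _ ≤ 9 * (N₂ * N₃) * (C * (2 * N₂) ^ θ) := by gcongr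
        _ = 9 * (C * 2 ^ θ) * (N₂ * N₂ ^ θ) * N₃ := by
          rw [Real.mul_rpow (by norm_num) hN₂.le]; ring
        _ ≤ (99 + 72 / θ + 9 * (C * 2 ^ θ)) * N₂ ^ (1 + θ) * N₃ := by
          rw [hpow]
          gcongr
          have : 0 ≤ 99 + 72 / θ := by positivity
          linarith
    · intro z
      have hw : Function.Injective fun y : ℤ × ℤ => ((u z).1 - 2 * y.1, (u z).2 - 2 * y.2) := by
        intro y y' h
        obtain ⟨h1, h2⟩ := Prod.mk.inj h
        exact Prod.ext (by omega) (by omega)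
      have hc := hcirc (2 * M₂) (by omega) ((u z).1 - 2 * b.1, (u z).2 - 2 * b.2)
        (2 * (ι₁ * (α - ι₃ * jbSqInt z) - 2) - (u z).1 ^ 2 - (u z).2 ^ 2)
        ((fib P z).image fun y => ((u z).1 - 2 * y.1, (u z).2 - 2 * y.2)) ?_ ?_
      · rw [Finset.card_image_of_injective _ hw] at hc
        push_cast at hc
        exact hc
      · intro w hw
        obtain ⟨y, hy, rfl⟩ := Finset.mem_image.1 hw
        obtain ⟨x, hx⟩ := hmem y z (mem_fib.1 hy)
        obtain ⟨e1, e2⟩ := hux x y z hx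
        obtain ⟨-, -, e3⟩ := heq x y z hx
        rw [← h12] at e3
        simp only [e1, e2]
        linear_combination 2 * ι₁ * e3 -
          2 * (2 + x.1 ^ 2 + x.2 ^ 2 + y.1 ^ 2 + y.2 ^ 2) * s1
      · intro w hw
        obtain ⟨y, hyf, rfl⟩ := Finset.mem_image.1 hw
        obtain ⟨h1, h2⟩ := hy _ (mem_fib.1 hyf)
        rw [abs_le] at h1 h2
        simp only [abs_le]
        push_cast
        simp only at h1 h2
        refine ⟨⟨?_, ?_⟩, ⟨?_, ?_⟩⟩ <;> linarith
end
end
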